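/- arXiv:2412.15842 — 3 statements merged into one kernel-verified Lean document; each statement's English description precedes it below -/
import Mathlib

section
/- Let G be a finite group acting transitively and faithfully with fixity 3 on a finite set Ω, and let N be a minimal normal subgroup of G which is a p-group of order p^n. If N does not act semi-regularly on Ω, then |Ω| = 6, |N| = 9, all N-orbits have length 3, G has order 36 with structure (C_3 × C_3) : C_4, and point stabilizers are isomorphic to Sym_3. -/
open MulAction Pointwise

def HasFixity (G Ω : Type*) [Group G] [MulAction G Ω] (k : ℕ) : Prop :=
  (∀ g : G, g ≠ 1 → (fixedBy Ω g).ncard ≤ k) ∧ ∃ g : G, g ≠ 1 ∧ (fixedBy Ω g).ncard = k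

def IsSemiregular (G Ω : Type*) [Group G] [MulAction G Ω] (N : Subgroup G) : Prop :=
  ∀ n ∈ N, n ≠ 1 → ∀ ω : Ω, n • ω ≠ ω

def IsMinimalNormal (G : Type*) [Group G] (N : Subgroup G) : Prop :=
  N.Normal ∧ N ≠ ⊥ ∧ ∀ M : Subgroup G, M.Normal → M ≤ N → M = ⊥ ∨ M = N

def IsOrbitOf (G Ω : Type*) [Group G] [MulAction G Ω] (N : Subgroup G) (s : Set Ω) : Prop :=
  ∃ ω : Ω, s = MulAction.orbit N ω

def IsRegularOn (G Ω : Type*) [Group G] [MulAction G Ω] (R : Subgroup G) : Prop :=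
  (∀ ω ω' : Ω, ∃ r ∈ R, r • ω = ω') ∧ ∀ r ∈ R, r ≠ 1 → ∀ ω : Ω, r • ω ≠ ω

def IsFrobeniusOn (G Ω : Type*) [Group G] [MulAction G Ω] (F : Subgroup G) (s : Set Ω) : Prop :=
  (∃ f ∈ F, f ≠ 1 ∧ ∃ ω ∈ s, f • ω = ω) ∧
  ∀ f ∈ F, f ≠ 1 → ∀ ω ∈ s, ∀ ω' ∈ s, f • ω = ω → f • ω' = ω' → ω = ω'


structure Cfg (G Ω : Type*) [Group G] [MulAction G Ω] (N : Subgroup G) : Prop where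
  nrm : ∀ g : G, ∀ a ∈ N, g * a * g⁻¹ ∈ N
  comm : ∀ a ∈ N, ∀ b ∈ N, a * b = b * a
  cube : ∀ a ∈ N, a * a * a = 1
  four : ∀ g : G, ∀ a b c d : Ω, a ≠ b → a ≠ c → a ≠ d → b ≠ c → b ≠ d → c ≠ d →
    g • a = a → g • b = b → g • c = c → g • d = d → g = 1
  ex : ∀ ω : Ω, ∃ n ∈ N, n ≠ 1 ∧ n • ω = ω
  line : ∀ ω : Ω, ∀ n ∈ N, n ≠ 1 → n • ω = ω → ∀ m ∈ N, m • ω = ω → m = 1 ∨ m = n ∨ m = n⁻¹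
  dis : ∀ ω ω' : Ω, ∀ n ∈ N, n ≠ 1 → n • ω = ω → n • ω' = ω' → ∃ k ∈ N, k • ω = ω'
  dec : ∀ ω₁ ω₂ : Ω, (¬ ∃ k ∈ N, k • ω₁ = ω₂) → ∀ a ∈ N, ∃ x ∈ N, ∃ y ∈ N,
    x • ω₁ = ω₁ ∧ y • ω₂ = ω₂ ∧ a = x * y

namespace Cfg

variable {G Ω : Type*} [Group G] [MulAction G Ω] {N : Subgroup G}

lemma rel_symm {a b : Ω} (h : ∃ k ∈ N, k • a = b) : ∃ k ∈ N, k • b = a := by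
  obtain ⟨k, hk, rfl⟩ := h
  exact ⟨k⁻¹, N.inv_mem hk, by simp⟩

lemma rel_trans {a b c : Ω} (h : ∃ k ∈ N, k • a = b) (h' : ∃ k ∈ N, k • b = c) :
    ∃ k ∈ N, k • a = c := by
  obtain ⟨k, hk, rfl⟩ := h
  obtain ⟨l, hl, rfl⟩ := h'
  exact ⟨l * k, N.mul_mem hl hk, by simp [mul_smul]⟩

lemma rel_smul (h : Cfg G Ω N) {a b : Ω} (g : G) (hk : ∃ k ∈ N, k • a = b) :
    ∃ k ∈ N, k • (g • a) = g • b := by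
  obtain ⟨k, hk, rfl⟩ := hk
  exact ⟨_, h.nrm g k hk, by simp [mul_smul]⟩

lemma sq (h : Cfg G Ω N) {a : G} (ha : a ∈ N) : a * a = a⁻¹ :=
  eq_inv_of_mul_eq_one_left (h.cube a ha)

lemma inv_ne (h : Cfg G Ω N) {a : G} (ha : a ∈ N) (h1 : a ≠ 1) : a⁻¹ ≠ a := by
  intro e
  rw [← h.sq ha] at e
  exact h1 (by simpa using e)

/-- the stabilizer in `N` is constant on blocks -/
lemma same (h : Cfg G Ω N) {a b : Ω} (hk : ∃ k ∈ N, k • a = b) {n : G} (hn : n ∈ N)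
    (hf : n • a = a) : n • b = b := by
  obtain ⟨k, hk, rfl⟩ := hk
  rw [← mul_smul, h.comm n hn k hk, mul_smul, hf]

lemma conj_fix {a : Ω} {g n : G} (hf : n • a = a) : (g * n * g⁻¹) • (g • a) = g • a := by
  simp [mul_smul, hf]

lemma conj_ne {g n : G} (h1 : n ≠ 1) : g * n * g⁻¹ ≠ 1 := by
  simpa using h1

lemma inverter_fix (h : Cfg G Ω N) {t n : G} {ω : Ω} (hn : n ∈ N) (ht : t • ω = n • ω)
    (hi : t * n * t⁻¹ = n⁻¹) : t • (n⁻¹ • ω) = n⁻¹ • ω := by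
  have e : t * n⁻¹ = n * t := by
    have : t * n⁻¹ * t⁻¹ = n := by
      have := congrArg (·⁻¹) hi
      simpa [mul_assoc] using this
    exact mul_inv_eq_iff_eq_mul.mp this
  rw [← mul_smul, e, mul_smul, ht, ← mul_smul, h.sq hn]

lemma scalar_block (h : Cfg G Ω N) {t : G} 
    (ht : (∀ a ∈ N, t * a * t⁻¹ = a) ∨ (∀ a ∈ N, t * a * t⁻¹ = a⁻¹)) (ω : Ω) :
    ∃ k ∈ N, k • ω = t • ω := by
  obtain ⟨n, hn, h1, hf⟩ := h.ex ω
  have := conj_fix (g := t) hf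
  rcases ht with ht | ht
  · rw [ht n hn] at this
    exact h.dis _ _ n hn h1 hf this
  · rw [ht n hn] at this
    exact h.dis _ _ n hn h1 hf (inv_smul_eq_iff.mp this).symm

lemma line_scalar (h : Cfg G Ω N) {b : G} {ω : Ω} (hb : ∃ k ∈ N, k • ω = b • ω) :
    (∀ x ∈ N, x • ω = ω → b * x * b⁻¹ = x) ∨ (∀ x ∈ N, x • ω = ω → b * x * b⁻¹ = x⁻¹) := by
  obtain ⟨n, hn, h1, hf⟩ := h.ex ω
  have h2 := h.same (rel_symm hb) (h.nrm b n hn) (conj_fix hf)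
  have h3 : ∀ x ∈ N, x • ω = ω → x = 1 ∨ x = n ∨ x = n⁻¹ := h.line ω n hn h1 hf
  rcases h3 _ (h.nrm b n hn) h2 with e | e | e
  · exact absurd e (conj_ne h1)
  · left
    intro x hx hxf
    rcases h3 x hx hxf with rfl | rfl | rfl
    · simp
    · exact e
    · rw [← conj_inv, e]
  · right
    intro x hx hxf
    rcases h3 x hx hxf with rfl | rfl | rfl
    · simp
    · exact e
    · rw [← conj_inv, e]

lemma mixed (h : Cfg G Ω N) {b : G} {ω₁ ω₂ : Ω} (hd : ¬ ∃ k ∈ N, k • ω₁ = ω₂)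
    (hb₁ : ∃ k ∈ N, k • ω₁ = b • ω₁) (hb₂ : ∃ k ∈ N, k • ω₂ = b • ω₂)
    (h1 : ∀ x ∈ N, x • ω₁ = ω₁ → b * x * b⁻¹ = x)
    (h2 : ∀ x ∈ N, x • ω₂ = ω₂ → b * x * b⁻¹ = x⁻¹) : False := by
  obtain ⟨m, hm, hbm⟩ := hb₂
  obtain ⟨x, hx, y, hy, hxf, hyf, rfl⟩ := h.dec ω₁ ω₂ hd m hm
  have hbx : b • ω₂ = x • ω₂ := by rw [← hbm, mul_smul, hyf]
  obtain ⟨c, hc⟩ : ∃ c, c = x⁻¹ * b := ⟨_, rfl⟩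
  have hx' := N.inv_mem hx
  have hcc : ∀ a ∈ N, c * a * c⁻¹ = b * a * b⁻¹ := by
    intro a ha
    have := h.comm _ hx' _ (h.nrm b a ha)
    calc c * a * c⁻¹ = x⁻¹ * (b * a * b⁻¹) * x := by rw [hc]; group
      _ = b * a * b⁻¹ := by rw [this]; group
  have hc2 : c • ω₂ = ω₂ := by rw [hc, mul_smul, hbx, inv_smul_smul]
  have hc1 : ∃ k ∈ N, k • ω₁ = c • ω₁ := by
    refine rel_trans hb₁ ⟨x⁻¹, hx', by rw [hc, mul_smul]⟩
  obtain ⟨m', hm', hbm'⟩ := hc1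
  obtain ⟨u, hu, v, hv, huf, hvf, rfl⟩ := h.dec ω₁ ω₂ hd m' hm'
  have hcv : c • ω₁ = v • ω₁ := by rw [← hbm', h.comm u hu v hv, mul_smul, huf]
  have hfix := h.inverter_fix hv hcv (by rw [hcc v hv, h2 v hv hvf])
  obtain ⟨n, hn, hn1, hnf⟩ := h.ex ω₁
  have hnc : ∀ k ∈ N, k • ω₁ = ω₁ → c • (k • ω₂) = k • ω₂ := by
    intro k hk hkf
    have : c * k = k * c := by
      have e := h1 k hk hkf
      rw [← hcc k hk] at e
      exact mul_inv_eq_iff_eq_mul.mp e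
    rw [← mul_smul, this, mul_smul, hc2]
  have hA : n • ω₂ ≠ ω₂ := fun e => hd (h.dis _ _ n hn hn1 hnf e)
  have hA' : n⁻¹ • ω₂ ≠ ω₂ := fun e => hA (inv_smul_eq_iff.mp e).symm
  have hA'' : n • ω₂ ≠ n⁻¹ • ω₂ := by
    rw [← h.sq hn, mul_smul]
    intro e
    exact hA (smul_left_cancel n e).symm
  have hB : ∀ k ∈ N, v⁻¹ • ω₁ ≠ k • ω₂ := by
    intro k hk e
    apply hd
    refine ⟨k⁻¹ * v⁻¹, N.mul_mem (N.inv_mem hk) (N.inv_mem hv), by rw [mul_smul, e, inv_smul_smul]⟩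
  have hc1 := h.four c (v⁻¹ • ω₁) ω₂ (n • ω₂) (n⁻¹ • ω₂) (by simpa using hB 1 N.one_mem) (hB n hn)
    (hB _ (N.inv_mem hn)) hA.symm hA'.symm hA'' hfix hc2 (hnc n hn hnf)
    (hnc _ (N.inv_mem hn) (inv_smul_eq_iff.mpr hnf.symm))
  obtain ⟨w, hw, hw1, hwf⟩ := h.ex ω₂
  have := h2 w hw hwf
  rw [← hcc w hw, hc1] at this
  exact h.inv_ne hw hw1 (by simpa using this.symm)

lemma scalar (h : Cfg G Ω N) {b : G} {ω₁ ω₂ : Ω} (hd : ¬ ∃ k ∈ N, k • ω₁ = ω₂)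
    (hb₁ : ∃ k ∈ N, k • ω₁ = b • ω₁) (hb₂ : ∃ k ∈ N, k • ω₂ = b • ω₂) :
    (∀ a ∈ N, b * a * b⁻¹ = a) ∨ (∀ a ∈ N, b * a * b⁻¹ = a⁻¹) := by
  rcases h.line_scalar hb₁ with h1 | h1 <;> rcases h.line_scalar hb₂ with h2 | h2
  · left
    intro a ha
    obtain ⟨x, hx, y, hy, hxf, hyf, rfl⟩ := h.dec ω₁ ω₂ hd a ha
    rw [← conj_mul, h1 x hx hxf, h2 y hy hyf]
  · exact (h.mixed hd hb₁ hb₂ h1 h2).elim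
  · exact (h.mixed (fun e => hd (rel_symm e)) hb₂ hb₁ h2 h1).elim
  · right
    intro a ha
    obtain ⟨x, hx, y, hy, hxf, hyf, rfl⟩ := h.dec ω₁ ω₂ hd a ha
    rw [← conj_mul, h1 x hx hxf, h2 y hy hyf, h.comm x hx y hy, mul_inv_rev]

lemma swap_pos (h : Cfg G Ω N) {g : G} {ω₁ ω₂ : Ω} (hd : ¬ ∃ k ∈ N, k • ω₁ = ω₂)
    (hg : ∃ k ∈ N, k • (g • ω₁) = ω₂)
    (hs : ∀ a ∈ N, (g * g) * a * (g * g)⁻¹ = a) :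
    ∃ n₁ ∈ N, ∃ n₂ ∈ N, n₁ ≠ 1 ∧ n₂ ≠ 1 ∧ n₁ • ω₁ = ω₁ ∧ n₂ • ω₂ = ω₂ ∧
      n₁ * n₂ ≠ 1 ∧ n₁ * n₂⁻¹ ≠ 1 ∧ g * (n₁ * n₂) * g⁻¹ = n₁ * n₂ ∧
      g * (n₁ * n₂⁻¹) * g⁻¹ = (n₁ * n₂⁻¹)⁻¹ := by
  obtain ⟨n, hn, hn1, hnf⟩ := h.ex ω₁
  have hm := h.nrm g n hn
  have hmf : (g * n * g⁻¹) • ω₂ = ω₂ := h.same hg hm (conj_fix hnf)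
  have hb : g * (g * n * g⁻¹) * g⁻¹ = n := by
    calc _ = (g * g) * n * (g * g)⁻¹ := by group
      _ = n := hs n hn
  have hnf2 : n • ω₂ ≠ ω₂ := fun e => hd (h.dis _ _ n hn hn1 hnf e)
  refine ⟨n, hn, _, hm, hn1, conj_ne hn1, hnf, hmf, ?_, ?_, ?_, ?_⟩
  · intro e
    apply hnf2
    rw [eq_inv_of_mul_eq_one_left e, inv_smul_eq_iff]
    exact hmf.symm
  · intro e
    apply hnf2
    rw [mul_inv_eq_one.mp e]
    exact hmf
  · rw [← conj_mul, hb, h.comm _ hm _ hn]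
  · rw [← conj_mul, ← conj_inv, hb]; group

lemma four_lines (h : Cfg G Ω N) {ω₁ ω₂ : Ω} (hd : ¬ ∃ k ∈ N, k • ω₁ = ω₂) {n₁ n₂ : G}
    (h1 : n₁ ∈ N) (h2 : n₂ ∈ N) (h1n : n₁ ≠ 1) (h2n : n₂ ≠ 1) (h1f : n₁ • ω₁ = ω₁)
    (h2f : n₂ • ω₂ = ω₂) (a : G) (ha : a ∈ N) (ha1 : a ≠ 1) :
    ∃ b, (a = b ∨ a = b⁻¹) ∧ (b = n₁ ∨ b = n₂ ∨ b = n₁ * n₂ ∨ b = n₁ * n₂⁻¹) := by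
  obtain ⟨x, hx, y, hy, hxf, hyf, rfl⟩ := h.dec ω₁ ω₂ hd a ha
  have c1 := h.comm n₁ h1 n₂ h2
  have c2 := h.comm n₁ h1 _ (N.inv_mem h2)
  rcases h.line _ _ h1 h1n h1f _ hx hxf with rfl | rfl | rfl <;>
  rcases h.line _ _ h2 h2n h2f _ hy hyf with rfl | rfl | rfl
  · simp at ha1
  · exact ⟨_, Or.inl (one_mul _), Or.inr (Or.inl rfl)⟩
  · exact ⟨_, Or.inr (one_mul _), Or.inr (Or.inl rfl)⟩
  · exact ⟨_, Or.inl (mul_one _), Or.inl rfl⟩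
  · exact ⟨_, Or.inl rfl, by simp⟩
  · exact ⟨_, Or.inl rfl, by simp⟩
  · exact ⟨_, Or.inr (mul_one _), Or.inl rfl⟩
  · refine ⟨_, Or.inr ?_, Or.inr (Or.inr (Or.inr rfl))⟩
    rw [c2]; group
  · refine ⟨_, Or.inr ?_, Or.inr (Or.inr (Or.inl rfl))⟩
    rw [c1]; group

lemma exists_swap {G X : Type*} [Group G] [Finite G] [MulAction G X] [Finite X] [Nonempty X]
    [IsPretransitive G X] (h2 : 2 ∣ Nat.card X) : ∃ (g : G) (x : X), g • x ≠ x ∧ g • g • x = x := by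
  obtain ⟨x₀⟩ := ‹Nonempty X›
  let φ := MulAction.toPermHom G X
  have : IsPretransitive φ.range X := ⟨fun x y => by
    obtain ⟨g, hg⟩ := exists_smul_eq G x y
    exact ⟨⟨φ g, g, rfl⟩, hg⟩⟩
  have h3 : 2 ∣ Nat.card φ.range := by
    refine h2.trans ?_
    rw [← index_stabilizer_of_transitive φ.range x₀]
    exact Subgroup.index_dvd_card _
  obtain ⟨r, hr⟩ := exists_prime_orderOf_dvd_card' 2 h3
  obtain ⟨g, hg⟩ := r.2
  have hr' : orderOf (φ g) = 2 := by rw [← hr, hg, Subgroup.orderOf_coe]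
  have hne : φ g ≠ 1 := by intro e; rw [e] at hr'; simp at hr'
  have hsq : φ g ^ 2 = 1 := by rw [← hr']; exact pow_orderOf_eq_one _
  obtain ⟨x, hx⟩ : ∃ x, φ g x ≠ x := by
    by_contra! hc
    exact hne (Equiv.ext hc)
  refine ⟨g, x, hx, ?_⟩
  have := congrArg (fun σ : Equiv.Perm X => σ x) hsq
  rw [pow_two] at this
  exact this

lemma orbit_eq {a b : Ω} : orbit N a = orbit N b ↔ ∃ k ∈ N, k • a = b := by
  rw [eq_comm, MulAction.orbit_eq_iff]
  constructor
  · rintro ⟨k, rfl⟩; exact ⟨k, k.2, rfl⟩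
  · rintro ⟨k, hk, rfl⟩; exact ⟨⟨k, hk⟩, rfl⟩

lemma no_four [Finite G] [Finite Ω] [IsPretransitive G Ω] (h : Cfg G Ω N)
    {a b c d : Ω} (hab : ¬ ∃ k ∈ N, k • a = b) (hac : ¬ ∃ k ∈ N, k • a = c)
    (had : ¬ ∃ k ∈ N, k • a = d) (hbc : ¬ ∃ k ∈ N, k • b = c) (hbd : ¬ ∃ k ∈ N, k • b = d)
    (hcd : ¬ ∃ k ∈ N, k • c = d)
    (hcov : ∀ ω, (∃ k ∈ N, k • a = ω) ∨ (∃ k ∈ N, k • b = ω) ∨ (∃ k ∈ N, k • c = ω) ∨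
      (∃ k ∈ N, k • d = ω))
    (hall : ∀ x ∈ N, ∃ ω : Ω, x • ω = ω) : False := by
  have hN : N.Normal := ⟨fun n hn g => h.nrm g n hn⟩
  have hX : orbit G (orbit N a) = {orbit N a, orbit N b, orbit N c, orbit N d} := by
    ext s
    constructor
    · rintro ⟨g, rfl⟩
      simp only [smul_orbit_eq_orbit_smul, Set.mem_insert_iff, Set.mem_singleton_iff]
      rcases hcov (g • a) with e | e | e | e <;> simp [orbit_eq.mpr e]
    · have : ∀ x : Ω, orbit N x ∈ orbit G (orbit N a) := by
        intro x
        obtain ⟨g, rfl⟩ := exists_smul_eq G a x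
        exact ⟨g, smul_orbit_eq_orbit_smul N a g⟩
      rintro (rfl | rfl | rfl | rfl) <;> exact this _
  have hc4 : Nat.card (orbit G (orbit N a)) = 4 := by
    rw [hX, Nat.card_coe_set_eq]
    rw [Set.ncard_insert_of_notMem, Set.ncard_insert_of_notMem, Set.ncard_pair]
    · rwa [Ne, orbit_eq]
    · simp [orbit_eq, -not_exists, -not_and, hbc, hbd]
    · simp [orbit_eq, -not_exists, -not_and, hab, hac, had]
  have : Nonempty (orbit G (orbit N a)) := ⟨⟨_, mem_orbit_self _⟩⟩
  obtain ⟨g, ⟨s, hs⟩, h1, h2⟩ := exists_swap (G := G) (X := orbit G (orbit N a)) (by rw [hc4]; norm_num)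
  obtain ⟨g', rfl⟩ := hs
  have h1' : g • orbit N (g' • a) ≠ orbit N (g' • a) := by
    intro e; apply h1; apply Subtype.ext; simpa [smul_orbit_eq_orbit_smul] using e
  have h2' : g • g • orbit N (g' • a) = orbit N (g' • a) := by
    have := congrArg Subtype.val h2; simpa [smul_orbit_eq_orbit_smul] using this
  generalize g' • a = x at h1' h2'
  simp only [smul_orbit_eq_orbit_smul, Ne, orbit_eq] at h1' h2'
  have hd : ¬ ∃ k ∈ N, k • x = g • x := fun e => h1' (rel_symm e)
  have e1 : ∃ k ∈ N, k • x = (g * g) • x := by rw [mul_smul]; exact rel_symm h2'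
  have e2 : ∃ k ∈ N, k • (g • x) = (g * g) • (g • x) := by
    have := h.rel_smul g e1
    rwa [← mul_smul, ← mul_assoc, mul_smul] at this
  rcases h.scalar hd e1 e2 with hp | hm
  · obtain ⟨n₁, h1, n₂, h2, h1n, h2n, h1f, h2f, hu, hv, hgu, hgv⟩ :=
      h.swap_pos hd ⟨1, N.one_mem, one_smul _ _⟩ hp
    obtain ⟨z, hz⟩ := hall _ (N.mul_mem h1 h2)
    obtain ⟨w, hw⟩ := hall _ (N.mul_mem h1 (N.inv_mem h2))
    have hgz : ∃ k ∈ N, k • z = g • z := by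
      have := conj_fix (g := g) hz
      rw [hgu] at this
      exact h.dis _ _ _ (N.mul_mem h1 h2) hu hz this
    have hgw : ∃ k ∈ N, k • w = g • w := by
      have := conj_fix (g := g) hw
      rw [hgv] at this
      exact h.dis _ _ _ (N.mul_mem h1 (N.inv_mem h2)) hv hw (inv_smul_eq_iff.mp this).symm
    have hzw : ¬ ∃ k ∈ N, k • z = w := by
      intro e
      have hw' := h.same e (N.mul_mem h1 h2) hz
      have e1 : n₁⁻¹ • w = w := by
        have : (n₁ * n₂) * (n₁ * n₂⁻¹) = n₁⁻¹ := by
          rw [h.comm n₁ h1 n₂ h2, ← h.sq h1, h.comm n₁ h1 _ (N.inv_mem h2)]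
          calc n₂ * n₁ * (n₂⁻¹ * n₁) = n₂ * (n₁ * n₂⁻¹) * n₁ := by group
            _ = _ := by rw [h.comm n₁ h1 _ (N.inv_mem h2)]; group
        rw [← this, mul_smul, hw, hw']
      have e2 : n₂ • w = w := by
        have : n₂ = n₁⁻¹ * (n₁ * n₂) := by group
        rw [this, mul_smul, hw', e1]
      have e1' : n₁ • w = w := (inv_smul_eq_iff.mp e1).symm
      exact hd (rel_trans (h.dis _ _ n₁ h1 h1n h1f e1') (rel_symm (h.dis _ _ n₂ h2 h2n h2f e2)))
    exact hd (h.scalar_block (h.scalar hzw hgz hgw) x)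
  · have key : ∀ ω : Ω, ∃ k ∈ N, (g * g) • (k • ω) = k • ω := by
      intro ω
      obtain ⟨k, hk, e⟩ := h.scalar_block (Or.inr hm) ω
      exact ⟨k⁻¹, N.inv_mem hk, h.inverter_fix hk e.symm (hm k hk)⟩
    obtain ⟨ka, ha, fa⟩ := key a
    obtain ⟨kb, hb, fb⟩ := key b
    obtain ⟨kc, hc, fc⟩ := key c
    obtain ⟨kd, hd', fd⟩ := key d
    have ne : ∀ {x y : Ω} {k l : G}, k ∈ N → l ∈ N → (¬ ∃ k ∈ N, k • x = y) → k • x ≠ l • y := by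
      intro x y k l hk hl hn e
      exact hn ⟨l⁻¹ * k, N.mul_mem (N.inv_mem hl) hk, by rw [mul_smul, e, inv_smul_smul]⟩
    have := h.four _ _ _ _ _ (ne ha hb hab) (ne ha hc hac) (ne ha hd' had) (ne hb hc hbc)
      (ne hb hd' hbd) (ne hc hd' hcd) fa fb fc fd
    obtain ⟨n, hn, hn1, -⟩ := h.ex a
    have e := hm n hn
    rw [this] at e
    exact h.inv_ne hn hn1 (by simpa using e.symm)

lemma two_blocks [Finite G] [Finite Ω] [IsPretransitive G Ω] (h : Cfg G Ω N)
    (hmin : ∀ v ∈ N, v ≠ 1 → (∀ g : G, g * v * g⁻¹ = v ∨ g * v * g⁻¹ = v⁻¹) → False)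
    {ω₁ ω₂ : Ω} (hd : ¬ ∃ k ∈ N, k • ω₁ = ω₂) (ω : Ω) :
    (∃ k ∈ N, k • ω₁ = ω) ∨ (∃ k ∈ N, k • ω₂ = ω) := by
  obtain ⟨n₁, h1, h1n, h1f⟩ := h.ex ω₁
  obtain ⟨n₂, h2, h2n, h2f⟩ := h.ex ω₂
  have h2' := N.inv_mem h2
  have hu := N.mul_mem h1 h2
  have hv := N.mul_mem h1 h2'
  have h12 : n₁ • ω₂ ≠ ω₂ := fun e => hd (h.dis _ _ n₁ h1 h1n h1f e)
  have h21 : n₂ • ω₁ ≠ ω₁ := fun e => hd (rel_symm (h.dis _ _ n₂ h2 h2n h2f e))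
  have h2f' : n₂⁻¹ • ω₂ = ω₂ := inv_smul_eq_iff.mpr h2f.symm
  have hun : n₁ * n₂ ≠ 1 := by
    intro e; apply h12; rw [eq_inv_of_mul_eq_one_left e]; exact h2f'
  have hvn : n₁ * n₂⁻¹ ≠ 1 := by
    intro e; apply h12; rw [mul_inv_eq_one.mp e]; exact h2f
  have lines := h.four_lines hd h1 h2 h1n h2n h1f h2f
  have inv_fix : ∀ {b : G} {ω : Ω}, b⁻¹ • ω = ω ↔ b • ω = ω := by
    intro b ω; rw [inv_smul_eq_iff, eq_comm]
  have cov : ∀ ω, (∃ k ∈ N, k • ω₁ = ω) ∨ (∃ k ∈ N, k • ω₂ = ω) ∨ (n₁ * n₂) • ω = ω ∨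
      (n₁ * n₂⁻¹) • ω = ω := by
    intro ω
    obtain ⟨a, ha, ha1, haf⟩ := h.ex ω
    obtain ⟨b, hab, hb⟩ := lines a ha ha1
    have hbf : b • ω = ω := by
      rcases hab with rfl | rfl
      · exact haf
      · exact inv_fix.mp haf
    rcases hb with rfl | rfl | rfl | rfl
    · exact Or.inl (h.dis _ _ _ h1 h1n h1f hbf)
    · exact Or.inr (Or.inl (h.dis _ _ _ h2 h2n h2f hbf))
    · exact Or.inr (Or.inr (Or.inl hbf))
    · exact Or.inr (Or.inr (Or.inr hbf))
  -- a line without fixed points is normal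
  have conjfix : ∀ {v g : G} {ω : Ω}, (g * v * g⁻¹) • ω = ω → v • (g⁻¹ • ω) = g⁻¹ • ω := by
    intro v g ω e
    rw [mul_smul, mul_smul] at e
    exact (inv_smul_eq_iff.mpr e.symm).symm
  have hlone : ∀ v ∈ N, v ≠ 1 → (∀ ω : Ω, v • ω ≠ ω) →
      (∀ b, (b = n₁ ∨ b = n₂ ∨ b = n₁ * n₂ ∨ b = n₁ * n₂⁻¹) → b = v ∨ ∃ ω : Ω, b • ω = ω) →
      False := by
    intro v hv hv1 hvf hb
    refine hmin v hv hv1 fun g => ?_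
    obtain ⟨b, hab, hb'⟩ := lines _ (h.nrm g v hv) (conj_ne hv1)
    rcases hb b hb' with rfl | ⟨ω, hω⟩
    · exact hab
    · exfalso
      refine hvf (g⁻¹ • ω) (conjfix ?_)
      rcases hab with e | e
      · rw [e]; exact hω
      · rw [e]; exact inv_fix.mpr hω
  by_cases hU : ∃ ω : Ω, (n₁ * n₂) • ω = ω <;> by_cases hV : ∃ ω : Ω, (n₁ * n₂⁻¹) • ω = ω
  · exfalso
    obtain ⟨c, hc⟩ := hU
    obtain ⟨d, hd'⟩ := hV
    have ac : ¬ ∃ k ∈ N, k • ω₁ = c := by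
      intro e
      have := h.same (rel_symm e) hu hc
      rw [h.comm _ h1 _ h2, mul_smul, h1f] at this
      exact h21 this
    have bc : ¬ ∃ k ∈ N, k • ω₂ = c := by
      intro e
      have := h.same (rel_symm e) hu hc
      rw [mul_smul, h2f] at this
      exact h12 this
    have ad : ¬ ∃ k ∈ N, k • ω₁ = d := by
      intro e
      have := h.same (rel_symm e) hv hd'
      rw [h.comm _ h1 _ h2', mul_smul, h1f] at this
      exact h21 (inv_fix.mp this)
    have bd : ¬ ∃ k ∈ N, k • ω₂ = d := by
      intro e
      have := h.same (rel_symm e) hv hd'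
      rw [mul_smul, h2f'] at this
      exact h12 this
    have cd : ¬ ∃ k ∈ N, k • c = d := by
      intro e
      have hw' := h.same e hu hc
      have e1 : n₁⁻¹ • d = d := by
        have : (n₁ * n₂) * (n₁ * n₂⁻¹) = n₁⁻¹ := by
          rw [h.comm n₁ h1 n₂ h2, ← h.sq h1, h.comm n₁ h1 _ (N.inv_mem h2)]
          calc n₂ * n₁ * (n₂⁻¹ * n₁) = n₂ * (n₁ * n₂⁻¹) * n₁ := by group
            _ = _ := by rw [h.comm n₁ h1 _ (N.inv_mem h2)]; group
        rw [← this, mul_smul, hd', hw']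
      exact ad (h.dis _ _ n₁ h1 h1n h1f (inv_fix.mp e1))
    refine h.no_four hd ac ad bc bd cd ?_ ?_
    · intro ω
      rcases cov ω with e | e | e | e
      · exact Or.inl e
      · exact Or.inr (Or.inl e)
      · exact Or.inr (Or.inr (Or.inl (h.dis _ _ _ hu hun hc e)))
      · exact Or.inr (Or.inr (Or.inr (h.dis _ _ _ hv hvn hd' e)))
    · intro x hx
      by_cases hx1 : x = 1
      · exact ⟨ω, by rw [hx1, one_smul]⟩
      obtain ⟨b, hxb, hb⟩ := lines x hx hx1
      have : ∃ ω : Ω, b • ω = ω := by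
        rcases hb with rfl | rfl | rfl | rfl
        exacts [⟨_, h1f⟩, ⟨_, h2f⟩, ⟨_, hc⟩, ⟨_, hd'⟩]
      obtain ⟨z, hz⟩ := this
      refine ⟨z, ?_⟩
      rcases hxb with rfl | rfl
      · exact hz
      · exact inv_fix.mpr hz
  · exfalso
    push Not at hV
    refine hlone _ hv hvn hV ?_
    rintro b (rfl | rfl | rfl | rfl)
    exacts [Or.inr ⟨_, h1f⟩, Or.inr ⟨_, h2f⟩, Or.inr hU, Or.inl rfl]
  · exfalso
    push Not at hU
    refine hlone _ hu hun hU ?_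
    rintro b (rfl | rfl | rfl | rfl)
    exacts [Or.inr ⟨_, h1f⟩, Or.inr ⟨_, h2f⟩, Or.inl rfl, Or.inr hV]
  · push Not at hU hV
    rcases cov ω with e | e | e | e
    · exact Or.inl e
    · exact Or.inr e
    · exact absurd e (hU ω)
    · exact absurd e (hV ω)

lemma fix_rigid (h : Cfg G Ω N) {ω₁ ω₂ : Ω} (hd : ¬ ∃ k ∈ N, k • ω₁ = ω₂) {c : G}
    (h1 : c • ω₁ = ω₁) (h2 : ∀ k ∈ N, c • (k • ω₂) = k • ω₂) : c = 1 := by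
  obtain ⟨n, hn, hn1, hnf⟩ := h.ex ω₁
  have hA : n • ω₂ ≠ ω₂ := fun e => hd (h.dis _ _ n hn hn1 hnf e)
  have hA' : n⁻¹ • ω₂ ≠ ω₂ := fun e => hA (inv_smul_eq_iff.mp e).symm
  have hA'' : n • ω₂ ≠ n⁻¹ • ω₂ := by
    rw [← h.sq hn, mul_smul]
    intro e
    exact hA (smul_left_cancel n e).symm
  have hB : ∀ k ∈ N, ω₁ ≠ k • ω₂ := fun k hk e => hd (rel_symm ⟨k, hk, e.symm⟩)
  exact h.four c ω₁ ω₂ (n • ω₂) (n⁻¹ • ω₂) (by simpa using hB 1 N.one_mem) (hB n hn)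
    (hB _ (N.inv_mem hn)) hA.symm hA'.symm hA'' h1 (by simpa using h2 1 N.one_mem) (h2 n hn)
    (h2 _ (N.inv_mem hn))

lemma cent (h : Cfg G Ω N) {ω₁ ω₂ : Ω} (hd : ¬ ∃ k ∈ N, k • ω₁ = ω₂) {c : G}
    (hc : ∀ a ∈ N, c * a * c⁻¹ = a) : c ∈ N := by
  have hc' : ∀ a ∈ N, c * a = a * c := fun a ha => mul_inv_eq_iff_eq_mul.mp (hc a ha)
  obtain ⟨m, hm, e1⟩ := h.scalar_block (Or.inl hc) ω₁
  have hm' := N.inv_mem hm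
  have hc1 : ∀ a ∈ N, (m⁻¹ * c) * a = a * (m⁻¹ * c) := by
    intro a ha
    rw [mul_assoc, hc' a ha, ← mul_assoc, h.comm _ hm' _ ha, mul_assoc]
  have hc1' : ∀ a ∈ N, (m⁻¹ * c) * a * (m⁻¹ * c)⁻¹ = a := fun a ha =>
    mul_inv_eq_iff_eq_mul.mpr (hc1 a ha)
  have f1 : (m⁻¹ * c) • ω₁ = ω₁ := by rw [mul_smul, ← e1, inv_smul_smul]
  generalize hd' : m⁻¹ * c = d at *
  have key : d ∈ N := by
    obtain ⟨k, hk, e2⟩ := h.scalar_block (Or.inl hc1') ω₂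
    obtain ⟨x, hx, y, hy, hxf, hyf, rfl⟩ := h.dec ω₁ ω₂ hd k hk
    have hx' := N.inv_mem hx
    have e3 : d • ω₂ = x • ω₂ := by rw [← e2, mul_smul, hyf]
    have : x⁻¹ * d = 1 := by
      refine h.fix_rigid hd ?_ ?_
      · rw [mul_smul, f1, inv_smul_eq_iff, hxf]
      · intro k hk
        rw [← mul_smul, mul_assoc, hc1 k hk, ← mul_assoc, h.comm _ hx' _ hk, mul_smul, mul_smul, e3,
          smul_smul, smul_smul, inv_mul_cancel_right]
    rw [← inv_mul_eq_one.mp this]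
    exact hx
  have : c = m * d := by rw [← hd']; group
  rw [this]
  exact N.mul_mem hm key

lemma exists_gen [Finite G] [Finite Ω] [IsPretransitive G Ω] (h : Cfg G Ω N)
    (hmin : ∀ v ∈ N, v ≠ 1 → (∀ g : G, g * v * g⁻¹ = v ∨ g * v * g⁻¹ = v⁻¹) → False)
    {ω₁ ω₂ : Ω} (hd : ¬ ∃ k ∈ N, k • ω₁ = ω₂) :
    ∃ g : G, orderOf g = 4 ∧ ∀ x : G, ∃ i : ℕ, ∃ a ∈ N, x = g ^ i * a := by
  have cov := h.two_blocks hmin hd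
  have hK : ∀ x : G, (∃ k ∈ N, k • ω₁ = x • ω₁) →
      (∀ a ∈ N, x * a * x⁻¹ = a) ∨ (∀ a ∈ N, x * a * x⁻¹ = a⁻¹) := by
    intro x hx
    refine h.scalar hd hx ?_
    rcases cov (x • ω₂) with e | e
    · exfalso
      have := h.rel_smul x⁻¹ (rel_trans (rel_symm hx) e)
      simp only [inv_smul_smul] at this
      exact hd this
    · exact e
  have hK2 : ∀ g x : G, (∃ k ∈ N, k • ω₂ = g • ω₁) → (∃ k ∈ N, k • ω₂ = x • ω₁) →
      (∃ k ∈ N, k • ω₁ = (g⁻¹ * x) • ω₁) := by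
    intro g x hg hx
    have := h.rel_smul g⁻¹ (rel_trans (rel_symm hg) hx)
    rwa [inv_smul_smul, smul_smul] at this
  obtain ⟨g, hg⟩ := exists_smul_eq G ω₁ ω₂
  have hg12 : ∃ k ∈ N, k • ω₂ = g • ω₁ := ⟨1, N.one_mem, by rw [hg, one_smul]⟩
  have hg21 : ∃ k ∈ N, k • ω₁ = (g * g) • ω₁ := by
    rw [mul_smul, hg]
    rcases cov (g • ω₂) with e | e
    · exact e
    · exfalso
      have := h.rel_smul g⁻¹ e
      rw [inv_smul_smul, ← hg, inv_smul_smul, hg] at this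
      exact hd this
  have hinv : ∀ a ∈ N, (g * g) * a * (g * g)⁻¹ = a⁻¹ := by
    rcases hK _ hg21 with hp | hm
    · exfalso
      obtain ⟨n₁, h1, n₂, h2, -, -, -, -, hu, -, hgu, -⟩ :=
        h.swap_pos hd (rel_symm hg12) hp
      have hm := N.mul_mem h1 h2
      generalize n₁ * n₂ = u at *
      refine hmin u hm hu fun x => ?_
      rcases cov (x • ω₁) with e | e
      · rcases hK x e with e | e
        · exact Or.inl (e u hm)
        · exact Or.inr (e u hm)
      · have r : x * u * x⁻¹ = g * ((g⁻¹ * x) * u * (g⁻¹ * x)⁻¹) * g⁻¹ := by group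
        rcases hK _ (hK2 g x hg12 e) with e | e
        · left; rw [r, e u hm, hgu]
        · right; rw [r, e u hm, ← conj_inv, hgu]
    · exact hm
  have hg4 : g ^ 4 ∈ N := by
    refine h.cent hd fun a ha => ?_
    have : g ^ 4 * a * (g ^ 4)⁻¹ = (g * g) * ((g * g) * a * (g * g)⁻¹) * (g * g)⁻¹ := by
      simp only [pow_succ, pow_zero]; group
    rw [this, hinv a ha, hinv _ (N.inv_mem ha), inv_inv]
  obtain ⟨n, hn, hn1, hnf⟩ := h.ex ω₁
  have hg6 : ∀ a ∈ N, (g ^ 3) ^ 2 * a * ((g ^ 3) ^ 2)⁻¹ = a⁻¹ := by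
    intro a ha
    have : (g ^ 3) ^ 2 * a * ((g ^ 3) ^ 2)⁻¹ = (g * g) * (g ^ 4 * a * (g ^ 4)⁻¹) * (g * g)⁻¹ := by
      have : (g ^ 3) ^ 2 = (g * g) * g ^ 4 := by rw [← pow_mul, ← pow_two, ← pow_add]
      rw [this]; group
    rw [this, h.comm _ hg4 _ ha, mul_inv_cancel_right, hinv a ha]
  have hs12 : ∃ k ∈ N, k • ω₂ = (g ^ 3) • ω₁ := by
    have := h.rel_smul g hg21
    rw [hg] at this
    have e : g ^ 3 = g * (g * g) := by rw [pow_succ, pow_two, mul_assoc]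
    rw [e, mul_smul]
    exact this
  have hs4 : (g ^ 3) ^ 4 = 1 := by
    rw [← pow_mul, mul_comm, pow_mul, pow_succ, pow_two]
    exact h.cube _ hg4
  generalize g ^ 3 = s at *
  refine ⟨s, ?_, ?_⟩
  · have := orderOf_eq_prime_pow (x := s) (p := 2) (n := 1) ?_ (by simpa using hs4)
    · simpa using this
    · intro e
      have e' := hg6 n hn
      rw [pow_one] at e
      rw [e] at e'
      exact h.inv_ne hn hn1 (by simpa using e'.symm)
  · have hKK : ∀ x : G, (∃ k ∈ N, k • ω₁ = x • ω₁) → ∃ i : ℕ, ∃ a ∈ N, x = s ^ i * a := by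
      intro x hx
      rcases hK x hx with e | e
      · exact ⟨0, x, h.cent hd e, by simp⟩
      · refine ⟨2, (s ^ 2)⁻¹ * x, h.cent hd fun a ha => ?_, by simp⟩
        have r : (s ^ 2)⁻¹ * x * a * ((s ^ 2)⁻¹ * x)⁻¹ = (s ^ 2)⁻¹ * (x * a * x⁻¹) * s ^ 2 := by
          group
        rw [r, e a ha, ← hg6 a ha]
        group
    intro x
    rcases cov (x • ω₁) with e | e
    · exact hKK x e
    · obtain ⟨i, a, ha, hi⟩ := hKK _ (hK2 s x hs12 e)
      refine ⟨i + 1, a, ha, ?_⟩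
      rw [pow_succ', mul_assoc, ← hi, mul_inv_cancel_left]

lemma stab_perm [Finite G] [Finite Ω] [IsPretransitive G Ω] (h : Cfg G Ω N)
    (hmin : ∀ v ∈ N, v ≠ 1 → (∀ g : G, g * v * g⁻¹ = v ∨ g * v * g⁻¹ = v⁻¹) → False)
    {ω ω₂ : Ω} (hd : ¬ ∃ k ∈ N, k • ω = ω₂) (hc : Nat.card (stabilizer G ω) = 6)
    (ho : (orbit N ω₂).ncard = 3) : Nonempty (stabilizer G ω ≃* Equiv.Perm (Fin 3)) := by
  have cov := h.two_blocks hmin hd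
  let S : SubMulAction (stabilizer G ω) Ω :=
    { carrier := orbit N ω₂
      smul_mem' := by
        rintro ⟨s, hs⟩ x hx
        have hs' : s • ω = ω := hs
        have hx' : ∃ k ∈ N, k • ω₂ = x := orbit_eq.mp (MulAction.orbit_eq_iff.mpr hx).symm
        rcases cov (s • x) with e | e
        · exfalso
          have := h.rel_smul s⁻¹ e
          rw [inv_smul_smul, inv_smul_eq_iff.mpr hs'.symm] at this
          exact hd (rel_trans this (rel_symm hx'))
        · exact MulAction.orbit_eq_iff.mp (orbit_eq.mpr e).symm }
  have hcS : Nat.card S = 3 := by rw [← ho]; rfl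
  let φ := MulAction.toPermHom (stabilizer G ω) S
  have hinj : Function.Injective φ := by
    rw [injective_iff_map_eq_one]
    rintro ⟨s, hs⟩ e
    apply Subtype.ext
    refine h.fix_rigid hd hs ?_
    intro k hk
    have := congrArg (fun σ : Equiv.Perm S => (σ ⟨k • ω₂, ⟨⟨k, hk⟩, rfl⟩⟩ : Ω)) e
    exact this
  have hbij : Function.Bijective φ := by
    rw [Nat.bijective_iff_injective_and_card]
    refine ⟨hinj, ?_⟩
    rw [hc, Nat.card_perm, hcS]; rfl
  have e1 : S ≃ Fin 3 := Finite.equivFinOfCardEq hcS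
  exact ⟨(MulEquiv.ofBijective φ hbij).trans e1.permCongrHom⟩

end Cfg

lemma setup_comm {G : Type*} [Group G] [Finite G] (N : Subgroup G) (hmin : IsMinimalNormal G N)
    (p n : ℕ) (hp : p.Prime) (hcard : Nat.card N = p ^ n) : ∀ a ∈ N, ∀ b ∈ N, a * b = b * a := by
  have := Fact.mk hp
  have hN := hmin.1
  have hnt : Nontrivial N := (Subgroup.nontrivial_iff_ne_bot N).mpr hmin.2.1
  have hc := (IsPGroup.of_card hcard).center_nontrivial
  rcases hmin.2.2 ((Subgroup.center N).map N.subtype) inferInstance (Subgroup.map_subtype_le _)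
    with e | e
  · exfalso
    rw [Subgroup.map_eq_bot_iff_of_injective _ N.subtype_injective] at e
    exact (Subgroup.nontrivial_iff_ne_bot _).mp hc e
  · intro a ha b hb
    rw [← e] at ha
    obtain ⟨z, hz, rfl⟩ := ha
    have := Subgroup.mem_center_iff.mp hz ⟨b, hb⟩
    exact (congrArg Subtype.val this).symm

section
set_option linter.unusedSectionVars false
variable {G Ω : Type*} [Group G] [Finite G] [MulAction G Ω] [Finite Ω]
    [FaithfulSMul G Ω] [IsPretransitive G Ω]

lemma mem_orb {N : Subgroup G} {a b : Ω} : b ∈ orbit N a ↔ ∃ k ∈ N, k • a = b := by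
  rw [← MulAction.orbit_eq_iff, eq_comm, Cfg.orbit_eq]

lemma setup_ex (N : Subgroup G) (hN : N.Normal) (hns : ¬ IsSemiregular G Ω N) (ω : Ω) :
    ∃ n ∈ N, n ≠ 1 ∧ n • ω = ω := by
  unfold IsSemiregular at hns
  push Not at hns
  obtain ⟨n, hn, hn1, ω₀, hf⟩ := hns
  obtain ⟨g, rfl⟩ := exists_smul_eq G ω₀ ω
  exact ⟨_, hN.conj_mem n hn g, Cfg.conj_ne hn1, Cfg.conj_fix hf⟩

lemma orb_fixed (N : Subgroup G) (hcomm : ∀ a ∈ N, ∀ b ∈ N, a * b = b * a) {n : G} (hn : n ∈ N)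
    {ω : Ω} (hf : n • ω = ω) : orbit N ω ⊆ fixedBy Ω n := by
  intro x hx
  obtain ⟨k, hk, rfl⟩ := mem_orb.mp hx
  rw [mem_fixedBy, ← mul_smul, hcomm n hn k hk, mul_smul, hf]

lemma setup_p (hfix : HasFixity G Ω 3) (N : Subgroup G) (hmin : IsMinimalNormal G N)
    (p n : ℕ) (hp : p.Prime) (hcard : Nat.card N = p ^ n) (hns : ¬ IsSemiregular G Ω N) :
    p = 3 ∧ ∀ ω : Ω, (orbit N ω).ncard = 3 := by
  have hN := hmin.1
  have hcomm := setup_comm N hmin p n hp hcard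
  have hex := setup_ex N hN hns
  have h1 : ∀ ω : Ω, (orbit N ω).ncard = p ∧ p ≤ 3 := by
    intro ω
    obtain ⟨m, hm, hm1, hmf⟩ := hex ω
    have hle : (orbit N ω).ncard ≤ 3 :=
      (Set.ncard_le_ncard (orb_fixed N hcomm hm hmf)).trans (hfix.1 m hm1)
    have hne : (orbit N ω).ncard ≠ 1 := by
      intro e
      rw [Set.ncard_eq_one] at e
      obtain ⟨a, ha⟩ := e
      have hfx : ∀ k ∈ N, k • ω = ω := by
        intro k hk
        have e1 : k • ω ∈ orbit N ω := mem_orb.mpr ⟨k, hk, rfl⟩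
        have e2 : ω ∈ orbit N ω := mem_orbit_self _
        rw [ha] at e1 e2
        rw [Set.mem_singleton_iff] at e1 e2
        rw [e1, ← e2]
      apply hm1
      apply FaithfulSMul.eq_of_smul_eq_smul (α := Ω)
      intro x
      obtain ⟨g, rfl⟩ := exists_smul_eq G ω x
      have := hfx _ (hN.conj_mem m hm g⁻¹)
      rw [inv_inv, mul_smul, mul_smul, inv_smul_eq_iff] at this
      rw [this, one_smul]
    have hdvd : (orbit N ω).ncard ∣ p ^ n := by
      rw [← index_stabilizer, ← hcard]; exact Subgroup.index_dvd_card _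
    obtain ⟨j, -, hj⟩ := (Nat.dvd_prime_pow hp).mp hdvd
    have hj0 : j ≠ 0 := by rintro rfl; exact hne (by simpa using hj)
    have hpd : p ∣ (orbit N ω).ncard := hj ▸ dvd_pow_self p hj0
    have h2 := hp.two_le
    obtain ⟨q, hq⟩ := hpd
    have h0 : (orbit N ω).ncard ≠ 0 := by rw [hj]; exact pow_ne_zero _ hp.ne_zero
    have : q = 1 := by
      rcases q with _ | _ | q
      · omega
      · rfl
      · nlinarith
    rw [this] at hq
    omega
  obtain ⟨g, hg1, hg3⟩ := hfix.2
  have hp3 : p = 3 := by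
    obtain ⟨x, hx⟩ : (fixedBy Ω g).Nonempty := by
      rw [← Set.ncard_pos]; omega
    by_contra hne
    have hp2 : p = 2 := by have := (h1 x).2; have := hp.two_le; omega
    have hinv : ∀ a ∈ fixedBy Ω g, orbit N a ⊆ fixedBy Ω g := by
      intro a ha b hb
      by_cases hab : b = a
      · rwa [hab]
      have hset : {a, b} = orbit N a := by
        apply Set.eq_of_subset_of_ncard_le
        · rintro y (rfl | rfl)
          · exact mem_orbit_self _
          · exact hb
        · rw [(h1 a).1, Set.ncard_pair (Ne.symm hab), hp2]
        · exact Set.toFinite _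
      have ha' : g • a = a := ha
      have hgb : g • b ∈ orbit N a := by
        obtain ⟨k, hk, rfl⟩ := mem_orb.mp hb
        refine mem_orb.mpr ⟨_, hN.conj_mem k hk g, ?_⟩
        rw [mul_smul, mul_smul, inv_smul_eq_iff.mpr ha'.symm]
      rw [← hset] at hgb
      rcases hgb with e | e
      · exfalso
        apply hab
        apply smul_left_cancel g
        rw [e, ha']
      · exact e
    have hd := Set.ncard_sdiff_add_ncard_of_subset (hinv x hx)
    rw [hg3, (h1 x).1, hp2] at hd
    have hd1 : (fixedBy Ω g \ orbit N x).ncard = 1 := by omega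
    obtain ⟨w, hw⟩ := Set.ncard_eq_one.mp hd1
    have hwm : w ∈ fixedBy Ω g \ orbit N x := by rw [hw]; rfl
    have hsub : orbit N w ⊆ {w} := by
      rw [← hw]
      intro y hy
      refine ⟨hinv w hwm.1 hy, fun hyx => hwm.2 ?_⟩
      rw [← MulAction.orbit_eq_iff] at hy hyx ⊢
      rw [← hy, hyx]
    have := Set.ncard_le_ncard hsub
    rw [(h1 w).1, hp2, Set.ncard_singleton] at this
    omega
  exact ⟨hp3, fun ω => by rw [(h1 ω).1, hp3]⟩

lemma setup_cfg (hfix : HasFixity G Ω 3) (N : Subgroup G) (hmin : IsMinimalNormal G N)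
    (p n : ℕ) (hp : p.Prime) (hcard : Nat.card N = p ^ n) (hns : ¬ IsSemiregular G Ω N) :
    Cfg G Ω N ∧ (∀ ω : Ω, (orbit N ω).ncard = 3) ∧ (∀ ω : Ω, ∃ ω₂ : Ω, ¬ ∃ k ∈ N, k • ω = ω₂) ∧
    (∀ ω : Ω, Nat.card (stabilizer N ω) = 3) := by
  have hN := hmin.1
  have hcomm := setup_comm N hmin p n hp hcard
  have hex := setup_ex N hN hns
  obtain ⟨rfl, horb⟩ := setup_p hfix N hmin p n hp hcard hns
  have hdis : ∀ ω ω' : Ω, ∀ n ∈ N, n ≠ 1 → n • ω = ω → n • ω' = ω' → ∃ k ∈ N, k • ω = ω' := by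
    intro ω ω' m hm hm1 hf hf'
    rw [← mem_orb, ← MulAction.orbit_eq_iff]
    have e1 := Set.eq_of_subset_of_ncard_le (orb_fixed N hcomm hm hf)
      (by rw [horb]; exact hfix.1 m hm1)
    have e2 := Set.eq_of_subset_of_ncard_le (orb_fixed N hcomm hm hf')
      (by rw [horb]; exact hfix.1 m hm1)
    rw [e1, e2]
  have htwo : ∀ ω : Ω, ∃ ω₂ : Ω, ¬ ∃ k ∈ N, k • ω = ω₂ := by
    intro ω
    by_contra! hc
    obtain ⟨m, hm, hm1, hf⟩ := hex ω
    apply hm1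
    apply FaithfulSMul.eq_of_smul_eq_smul (α := Ω)
    intro x
    rw [one_smul]
    exact orb_fixed N hcomm hm hf (mem_orb.mpr (hc x))
  have hinj : ∀ ω₁ ω₂ : Ω, (¬ ∃ k ∈ N, k • ω₁ = ω₂) → 
      Function.Injective (fun k : stabilizer N ω₂ => (⟨(k : N) • ω₁, mem_orbit _ _⟩ : orbit N ω₁)) := by
    intro ω₁ ω₂ hd a b hab
    have hab' : (a : N) • ω₁ = (b : N) • ω₁ := congrArg Subtype.val hab
    by_contra hne
    apply hd
    refine hdis ω₁ ω₂ (((b : N)⁻¹ * (a : N) : N) : G) (Subtype.property _) ?_ ?_ ?_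
    · intro e
      apply hne
      have e' : (b : N)⁻¹ * (a : N) = 1 := Subtype.ext e
      exact (Subtype.ext (inv_mul_eq_one.mp e')).symm
    · change ((b : N)⁻¹ * (a : N)) • ω₁ = ω₁
      rw [mul_smul, hab', inv_smul_smul]
    · exact (stabilizer N ω₂).mul_mem ((stabilizer N ω₂).inv_mem b.2) a.2
  have hcs : ∀ ω : Ω, Nat.card (stabilizer N ω) = 3 := by
    intro ω
    obtain ⟨ω₂, hd⟩ := htwo ω
    have hle := Nat.card_le_card_of_injective _ (hinj ω₂ ω (fun e => hd (Cfg.rel_symm e)))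
    rw [Nat.card_coe_set_eq, horb] at hle
    have hdvd : Nat.card (stabilizer N ω) ∣ 3 ^ n := hcard ▸ Subgroup.card_subgroup_dvd_card _
    have hne : Nat.card (stabilizer N ω) ≠ 1 := by
      intro e
      obtain ⟨m, hm, hm1, hf⟩ := hex ω
      rw [Subgroup.card_eq_one] at e
      have : (⟨m, hm⟩ : N) ∈ stabilizer N ω := hf
      rw [e, Subgroup.mem_bot] at this
      exact hm1 (congrArg Subtype.val this)
    obtain ⟨j, -, hj⟩ := (Nat.dvd_prime_pow hp).mp hdvd
    rcases j with _ | j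
    · exact absurd (by simpa using hj) hne
    · rw [hj, pow_succ] at hle ⊢
      have := Nat.one_le_pow j 3 (by norm_num)
      omega
  have : Fact (Nat.Prime 3) := ⟨hp⟩
  have hcube1 : ∀ ω : Ω, ∀ a ∈ N, a • ω = ω → a * a * a = 1 := by
    intro ω a ha hf
    have := pow_card_eq_one' (x := (⟨⟨a, ha⟩, hf⟩ : stabilizer N ω))
    rw [hcs] at this
    have := congrArg (fun z : stabilizer N ω => ((z : N) : G)) this
    simpa [pow_succ] using this
  have hdec : ∀ ω₁ ω₂ : Ω, (¬ ∃ k ∈ N, k • ω₁ = ω₂) → ∀ a ∈ N, ∃ x ∈ N, ∃ y ∈ N,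
      x • ω₁ = ω₁ ∧ y • ω₂ = ω₂ ∧ a = x * y := by
    intro ω₁ ω₂ hd a ha
    have hb := (Nat.bijective_iff_injective_and_card _).mpr
      ⟨hinj ω₁ ω₂ hd, by rw [hcs, Nat.card_coe_set_eq, horb]⟩
    obtain ⟨y, hy⟩ := hb.2 ⟨a • ω₁, mem_orb.mpr ⟨a, ha, rfl⟩⟩
    have hy' : ((y : N) : G) • ω₁ = a • ω₁ := congrArg Subtype.val hy
    have hyN : ((y : N) : G) ∈ N := (y : N).2
    have hyf : ((y : N) : G) • ω₂ = ω₂ := y.2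
    generalize ((y : N) : G) = y at *
    refine ⟨a * y⁻¹, N.mul_mem ha (N.inv_mem hyN), y, hyN, ?_, hyf, by group⟩
    rw [hcomm a ha _ (N.inv_mem hyN), mul_smul, ← hy', inv_smul_smul]
  refine ⟨⟨fun g a ha => hN.conj_mem a ha g, hcomm, ?_, ?_, hex, ?_, hdis, hdec⟩, horb, htwo, hcs⟩
  · intro a ha
    obtain ⟨ω⟩ : Nonempty Ω := by
      obtain ⟨g, -, hg⟩ := hfix.2
      obtain ⟨x, hx⟩ : (fixedBy Ω g).Nonempty := by rw [← Set.ncard_pos]; omega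
      exact ⟨x⟩
    obtain ⟨ω₂, hd⟩ := htwo ω
    obtain ⟨x, hx, y, hy, hxf, hyf, rfl⟩ := hdec _ _ hd a ha
    have c : Commute x y := hcomm x hx y hy
    have ex := hcube1 _ x hx hxf
    have ey := hcube1 _ y hy hyf
    have e := c.mul_pow 3
    simp only [pow_succ, pow_zero, one_mul] at e
    rw [e, ex, ey, one_mul]
  · intro g a b c d hab hac had hbc hbd hcd ha hb hc hd
    by_contra hg
    have h3 := hfix.1 g hg
    have : ({a, b, c, d} : Set Ω) ⊆ fixedBy Ω g := by
      rintro x (rfl | rfl | rfl | rfl) <;> assumption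
    have h4 := Set.ncard_le_ncard this
    rw [Set.ncard_insert_of_notMem, Set.ncard_insert_of_notMem, Set.ncard_pair hcd] at h4
    · omega
    · simp [hbc, hbd]
    · simp [hab, hac, had]
  · intro ω a ha ha1 haf m hm hmf
    have hne : (⟨⟨a, ha⟩, haf⟩ : stabilizer N ω) ≠ 1 := by
      intro e
      exact ha1 (congrArg (fun z : stabilizer N ω => ((z : N) : G)) e)
    have hz := mem_zpowers_of_prime_card (hcs ω) (g' := ⟨⟨m, hm⟩, hmf⟩) hne
    obtain ⟨k, hk⟩ := Subgroup.mem_zpowers_iff.mp hz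
    have hk' : a ^ k = m := by
      have := congrArg (fun z : stabilizer N ω => ((z : N) : G)) hk
      simpa using this
    have h3 : a ^ (3 : ℤ) = 1 := by
      have := hcube1 ω a ha haf
      rw [show (3 : ℤ) = ((3 : ℕ) : ℤ) from rfl, zpow_natCast]
      simpa [pow_succ] using this
    have hr : a ^ (k % 3) = m := by
      rw [← hk']
      conv_rhs => rw [← Int.emod_add_mul_ediv k 3, zpow_add, zpow_mul, h3, one_zpow, mul_one]
    have hlt := Int.emod_lt_of_pos k (show (0 : ℤ) < 3 by norm_num)
    have hge := Int.emod_nonneg k (show (3 : ℤ) ≠ 0 by norm_num)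
    generalize k % 3 = r at *
    interval_cases r
    · left; simpa using hr.symm
    · right; left; simpa using hr.symm
    · right; right
      rw [← hr]
      have : a ^ (2 : ℤ) * a ^ (1 : ℤ) = 1 := by rw [← zpow_add]; exact h3
      rw [zpow_one] at this
      exact eq_inv_of_mul_eq_one_left this

end

theorem stmt_8 (G Ω : Type*) [Group G] [Finite G] [MulAction G Ω] [Finite Ω]
    [FaithfulSMul G Ω] [IsPretransitive G Ω] (hfix : HasFixity G Ω 3)
    (N : Subgroup G) (hmin : IsMinimalNormal G N)
    (p : ℕ) (n : ℕ) (hp : p.Prime) (hcard : Nat.card N = p ^ n)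
    (hnotsemi : ¬ IsSemiregular G Ω N) :
    Nat.card Ω = 6 ∧ Nat.card N = 9 ∧ (∀ ω : Ω, (MulAction.orbit N ω).ncard = 3) ∧
      Nat.card G = 36 ∧
      (∃ H K : Subgroup G, H.Normal ∧ Nat.card H = 9 ∧
        Nonempty (H ≃* (Multiplicative (ZMod 3) × Multiplicative (ZMod 3))) ∧
        Nonempty (K ≃* Multiplicative (ZMod 4)) ∧ H ⊓ K = ⊥ ∧ H ⊔ K = ⊤) ∧
      ∀ ω : Ω, Nonempty (stabilizer G ω ≃* Equiv.Perm (Fin 3)) := by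
  have hN := hmin.1
  obtain ⟨h, horb, htwo, hcs⟩ := setup_cfg hfix N hmin p n hp hcard hnotsemi
  obtain ⟨ω₁⟩ : Nonempty Ω := by
    obtain ⟨g, -, hg⟩ := hfix.2
    obtain ⟨x, hx⟩ : (fixedBy Ω g).Nonempty := by rw [← Set.ncard_pos]; omega
    exact ⟨x⟩
  obtain ⟨ω₂, hd⟩ := htwo ω₁
  have hN9 : Nat.card N = 9 := by
    have := Subgroup.index_mul_card (stabilizer N ω₁)
    rw [index_stabilizer, horb, hcs] at this
    omega
  have hmin' : ∀ v ∈ N, v ≠ 1 → (∀ g : G, g * v * g⁻¹ = v ∨ g * v * g⁻¹ = v⁻¹) → False := by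
    intro v hv hv1 hg
    have hnorm : (Subgroup.zpowers v).Normal := by
      refine ⟨fun a ha g => ?_⟩
      obtain ⟨k, rfl⟩ := Subgroup.mem_zpowers_iff.mp ha
      rw [← conj_zpow]
      refine Subgroup.zpow_mem _ ?_ k
      rcases hg g with e | e <;> rw [e]
      · exact Subgroup.mem_zpowers v
      · exact Subgroup.inv_mem _ (Subgroup.mem_zpowers v)
    rcases hmin.2.2 _ hnorm (by rwa [Subgroup.zpowers_le]) with e | e
    · exact hv1 (Subgroup.zpowers_eq_bot.mp e)
    · have h9 : orderOf v = 9 := by rw [← Nat.card_zpowers, e, hN9]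
      have h3 : v ^ 3 = 1 := by
        rw [pow_succ, pow_two]; exact h.cube v hv
      have := Nat.le_of_dvd (by norm_num) (orderOf_dvd_of_pow_eq_one h3)
      omega
  have cov := h.two_blocks hmin' hd
  have hΩ : Nat.card Ω = 6 := by
    have hu : (Set.univ : Set Ω) = orbit N ω₁ ∪ orbit N ω₂ := by
      symm
      rw [Set.eq_univ_iff_forall]
      intro x
      rcases cov x with e | e
      · exact Or.inl (mem_orb.mpr e)
      · exact Or.inr (mem_orb.mpr e)
    have hdisj : Disjoint (orbit N ω₁) (orbit N ω₂) := by
      rw [Set.disjoint_left]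
      intro x h1 h2
      exact hd (Cfg.rel_trans (mem_orb.mp h1) (Cfg.rel_symm (mem_orb.mp h2)))
    rw [← Set.ncard_univ, hu, Set.ncard_union_eq hdisj, horb, horb]
  obtain ⟨g, hg4, hgen⟩ := h.exists_gen hmin' hd
  have hK4 : Nat.card (Subgroup.zpowers g) = 4 := by rw [Nat.card_zpowers, hg4]
  have hinf : N ⊓ Subgroup.zpowers g = ⊥ := by
    apply Subgroup.inf_eq_bot_of_coprime
    rw [hN9, hK4]; norm_num
  have hcompl : Subgroup.IsComplement' (Subgroup.zpowers g) N := by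
    apply Subgroup.isComplement'_of_disjoint_and_mul_eq_univ
    · rw [disjoint_iff, inf_comm]; exact hinf
    · rw [Set.eq_univ_iff_forall]
      intro x
      obtain ⟨i, a, ha, rfl⟩ := hgen x
      exact Set.mul_mem_mul (Subgroup.pow_mem _ (Subgroup.mem_zpowers g) i) ha
  have hG : Nat.card G = 36 := by
    rw [← hcompl.card_mul_card, hK4, hN9]
  refine ⟨hΩ, hN9, horb, hG, ⟨N, Subgroup.zpowers g, hN, hN9, ?_, ?_, hinf, ?_⟩, ?_⟩
  · have := Fact.mk Nat.prime_three
    have hc : ∀ (a : stabilizer N ω₁) (b : stabilizer N ω₂),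
        Commute ((stabilizer N ω₁).subtype a) ((stabilizer N ω₂).subtype b) := by
      intro a b
      exact Subtype.ext (h.comm _ (a : N).2 _ (b : N).2)
    let φ := MonoidHom.noncommCoprod _ _ hc
    have hφ : Function.Bijective φ := by
      rw [Nat.bijective_iff_injective_and_card]
      constructor
      · rw [MonoidHom.noncommCoprod_injective]
        refine ⟨Subgroup.subtype_injective _, Subgroup.subtype_injective _, ?_⟩
        rw [Subgroup.range_subtype, Subgroup.range_subtype, Subgroup.disjoint_def]
        intro x h1 h2
        by_contra hx
        exact hd (h.dis _ _ (x : G) x.2 (fun e => hx (Subtype.ext e)) h1 h2)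
      · rw [Nat.card_prod, hcs, hcs, hN9]
    have h3 : Nat.card (Multiplicative (ZMod 3)) = 3 := by simp
    exact ⟨(MulEquiv.ofBijective φ hφ).symm.trans
      (MulEquiv.prodCongr (mulEquivOfPrimeCardEq (hcs ω₁) h3)
        (mulEquivOfPrimeCardEq (hcs ω₂) h3))⟩
  · exact ⟨mulEquivOfCyclicCardEq (by rw [hK4]; simp)⟩
  · rw [sup_comm]; exact hcompl.sup_eq_top
  · intro ω
    obtain ⟨ω', hd'⟩ := htwo ω
    refine h.stab_perm hmin' hd' ?_ (horb _)
    have := Subgroup.index_mul_card (stabilizer G ω)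
    rw [index_stabilizer_of_transitive, hΩ, hG] at this
    omega
end

section
/- Let G be a finite group acting transitively and faithfully with fixity 3 on a finite set Ω, and let N be a minimal normal subgroup of prime power order acting semi-regularly such that there are exactly three N-orbits. Then G has a normal subgroup that either acts regularly on Ω, or has index 3 or 6 in G, has exactly three orbits on Ω, and acts as a Frobenius group on each of its orbits. -/
open MulAction Pointwise

namespace Fix3

theorem smul_orbit_eq {G Ω : Type*} [Group G] [MulAction G Ω] (N : Subgroup G) [hN : N.Normal]
    (g : G) (ω : Ω) : g • (orbit N ω : Set Ω) = orbit N (g • ω) := by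
  ext x
  constructor
  · rintro ⟨y, ⟨m, rfl⟩, rfl⟩
    refine ⟨⟨g * m * g⁻¹, hN.conj_mem _ m.2 g⟩, ?_⟩
    simp [Subgroup.smul_def, smul_smul]
  · rintro ⟨m, rfl⟩
    refine ⟨(g⁻¹ * m * g) • ω, ⟨⟨g⁻¹ * m * g, by simpa using hN.conj_mem _ m.2 g⁻¹⟩, rfl⟩, ?_⟩
    simp [Subgroup.smul_def, smul_smul, mul_assoc]

theorem perm3 {B : Type*} [Fintype B] [DecidableEq B] (hB : Fintype.card B = 3)
    (s : Equiv.Perm B) (hs : Equiv.Perm.sign s = 1) (b : B) (hb : s b = b) : s = 1 := by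
  let e := Fintype.equivFinOfCardEq hB
  have key : ∀ t : Equiv.Perm (Fin 3), Equiv.Perm.sign t = 1 → (∃ i, t i = i) → t = 1 := by decide
  have h1 := key (e.permCongr s) (by rw [Equiv.Perm.sign_permCongr]; exact hs)
    ⟨e b, by simp [Equiv.permCongr_apply, hb]⟩
  ext x
  have := congrArg (fun t => e.symm (t (e x))) h1
  simpa using this

theorem blocks (G Ω : Type*) [Group G] [Finite G] [MulAction G Ω] [Finite Ω]
    [IsPretransitive G Ω] (N : Subgroup G) [hN : N.Normal]
    (horb : {s : Set Ω | IsOrbitOf G Ω N s}.ncard = 3) :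
    ∃ K A : Subgroup G, K.Normal ∧ A.Normal ∧ (∀ g, g ∈ K ↔ ∀ ω : Ω, g • ω ∈ orbit N ω) ∧
      K ≤ A ∧ (A.index = 1 ∨ A.index = 2) ∧ K.relIndex A = 3 ∧
      ∀ a ∈ A, ∀ ω : Ω, a • ω ∈ orbit N ω → a ∈ K := by
  classical
  let B := {s : Set Ω | IsOrbitOf G Ω N s}
  let _ : MulAction G B :=
    { smul := fun g s => ⟨g • s.1, by
        obtain ⟨ω, hω⟩ := s.2
        exact ⟨g • ω, by rw [hω, smul_orbit_eq]⟩⟩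
      one_smul := fun s => Subtype.ext (one_smul G s.1)
      mul_smul := fun a b s => Subtype.ext (mul_smul a b s.1) }
  have : Fintype B := Fintype.ofFinite _
  have hB : Fintype.card B = 3 := by
    rw [← Nat.card_eq_fintype_card]; exact horb
  have : Nontrivial B := Fintype.one_lt_card_iff_nontrivial.mp (by omega)
  let bl : Ω → B := fun ω => ⟨orbit N ω, ω, rfl⟩
  have hbl : ∀ (g : G) ω, g • bl ω = bl (g • ω) := fun g ω => Subtype.ext (smul_orbit_eq N g ω)
  have hbl2 : ∀ (g : G) ω, g • bl ω = bl ω ↔ g • ω ∈ orbit N ω := by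
    intro g ω
    rw [hbl]
    constructor
    · intro h
      have := congrArg Subtype.val h
      exact orbit_eq_iff.mp this
    · intro h
      exact Subtype.ext (orbit_eq_iff.mpr h)
  have : IsPretransitive G B := ⟨by
    rintro ⟨_, ω, rfl⟩ ⟨_, ω', rfl⟩
    obtain ⟨g, hg⟩ := exists_smul_eq G ω ω'
    refine ⟨g, ?_⟩
    have := hbl g ω
    rw [hg] at this
    exact this⟩
  let φ : G →* Equiv.Perm B := toPermHom G B
  let K := φ.ker
  let A := (Equiv.Perm.sign.comp φ).ker
  have hKA : K ≤ A := by
    intro x hx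
    have : φ x = 1 := hx
    show Equiv.Perm.sign (φ x) = 1
    simp [this]
  have hA : A.index ∣ 2 := by
    have := Subgroup.index_ker (Equiv.Perm.sign.comp φ)
    rw [show A.index = _ from this]
    have h2 : Nat.card ℤˣ = 2 := by simp
    rw [← h2]
    exact Subgroup.card_subgroup_dvd_card _
  have hA' : A.index = 1 ∨ A.index = 2 := (Nat.dvd_prime Nat.prime_two).mp hA
  have hfixK : ∀ a ∈ A, ∀ ω : Ω, a • ω ∈ orbit N ω → a ∈ K := by
    intro a ha ω h
    exact perm3 hB (φ a) ha (bl ω) ((hbl2 a ω).mpr h)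
  refine ⟨K, A, inferInstance, inferInstance, ?_, hKA, hA', ?_, hfixK⟩
  · intro g
    constructor
    · intro h ω
      rw [← hbl2]
      have : φ g = 1 := h
      exact congrArg (fun t : Equiv.Perm B => t (bl ω)) this
    · intro h
      refine Equiv.ext ?_
      rintro ⟨_, ω, rfl⟩
      exact (hbl2 g ω).mpr (h ω)
  · have h3 : 3 ∣ K.index := by
      have b : B := Classical.arbitrary _
      have h1 := MulAction.index_stabilizer_of_transitive G b
      rw [Nat.card_eq_fintype_card, hB] at h1
      rw [← h1]
      apply Subgroup.index_dvd_of_le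
      intro x hx
      have : φ x = 1 := hx
      exact congrArg (fun t : Equiv.Perm B => t b) this
    have h4 : K.relIndex A ∣ 3 := by
      have e : K.relIndex A = Nat.card (A.map φ) := by
        rw [Subgroup.relIndex]
        have : K.subgroupOf A = (φ.comp A.subtype).ker := rfl
        rw [this, Subgroup.index_ker, MonoidHom.range_comp, Subgroup.range_subtype]
      have h5 : Nat.card (alternatingGroup B) = 3 := by
        rw [nat_card_alternatingGroup, Nat.card_eq_fintype_card, hB]; rfl
      rw [e, ← h5]
      apply Subgroup.card_dvd_of_le
      rintro _ ⟨a, ha, rfl⟩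
      exact ha
    have h5 := Subgroup.relIndex_mul_index hKA
    rcases (Nat.dvd_prime Nat.prime_three).mp h4 with h | h
    · rw [← h5, h] at h3
      rcases hA' with h' | h' <;> rw [h'] at h3 <;> omega
    · exact h

/-- `N ∩ C(g)` -/
def CN {G : Type*} [Group G] (N : Subgroup G) (g : G) : Subgroup G :=
  N ⊓ Subgroup.centralizer {g}

theorem mem_CN {G : Type*} [Group G] {N : Subgroup G} {g m : G} :
    m ∈ CN N g ↔ m ∈ N ∧ g * m = m * g := by
  simp only [CN, Subgroup.mem_inf, Subgroup.mem_centralizer_singleton_iff]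
  constructor <;> rintro ⟨a, b⟩ <;> exact ⟨a, b.symm⟩

/-- standing assumptions -/
structure Setup (G Ω : Type*) [Group G] [MulAction G Ω] (N K : Subgroup G) (p n : ℕ) : Prop where
  normal : N.Normal
  prime : p.Prime
  card : Nat.card N = p ^ n
  ne_bot : N ≠ ⊥
  comm : ∀ a ∈ N, ∀ b ∈ N, a * b = b * a
  semi : IsSemiregular G Ω N
  fix : ∀ g : G, g ≠ 1 → (fixedBy Ω g).ncard ≤ 3
  memK : ∀ g, g ∈ K ↔ ∀ ω : Ω, g • ω ∈ orbit N ω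
  orb : {s : Set Ω | IsOrbitOf G Ω N s}.ncard = 3

section
variable {G Ω : Type*} [Group G] [Finite G] [MulAction G Ω] [Finite Ω] {N K : Subgroup G} {p n : ℕ}

theorem Setup.inj (S : Setup G Ω N K p n) {a b : G} (ha : a ∈ N) (hb : b ∈ N) {ω : Ω}
    (h : a • ω = b • ω) : a = b := by
  by_contra hne
  refine S.semi (b⁻¹ * a) (N.mul_mem (N.inv_mem hb) ha) (fun h' => hne ?_) ω ?_
  · rw [inv_mul_eq_one] at h'; exact h'.symm
  · rw [mul_smul, h, inv_smul_smul]

theorem Setup.card_orbit (S : Setup G Ω N K p n) (ω : Ω) : Nat.card (orbit N ω) = Nat.card N := by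
  symm
  refine Nat.card_congr (Equiv.ofBijective (fun m : N => (⟨m • ω, m, rfl⟩ : orbit N ω)) ⟨?_, ?_⟩)
  · intro a b h
    have := congrArg Subtype.val h
    exact Subtype.ext (S.inj a.2 b.2 this)
  · rintro ⟨_, m, rfl⟩
    exact ⟨m, rfl⟩

theorem Setup.cardΩ (S : Setup G Ω N K p n) : Nat.card Ω = 3 * Nat.card N := by
  classical
  let B := {s : Set Ω | IsOrbitOf G Ω N s}
  have : Fintype B := Fintype.ofFinite _
  let bl : Ω → B := fun ω => ⟨orbit N ω, ω, rfl⟩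
  rw [← Nat.card_congr (Equiv.sigmaFiberEquiv bl), Nat.card_sigma]
  have : ∀ b : B, Nat.card {x // bl x = b} = Nat.card N := by
    rintro ⟨_, ω, rfl⟩
    rw [← S.card_orbit ω]
    refine Nat.card_congr (Equiv.subtypeEquivRight fun x => ?_)
    rw [← orbit_eq_iff]
    exact Subtype.ext_iff
  rw [Finset.sum_congr rfl fun b _ => this b]
  have hB : Fintype.card B = 3 := by
    rw [← Nat.card_eq_fintype_card]; exact S.orb
  simp [hB]

theorem Setup.fix_orbit (S : Setup G Ω N K p n) {g : G} {ω : Ω} (h : g • ω = ω) {m : G}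
    (hm : m ∈ N) : g • m • ω = m • ω ↔ m ∈ CN N g := by
  rw [mem_CN]
  have e : g • m • ω = (g * m * g⁻¹) • ω := by
    conv_rhs => rw [mul_smul, mul_smul]
    rw [show g⁻¹ • ω = ω from by rw [inv_smul_eq_iff, h]]
  rw [e]
  constructor
  · intro h'
    refine ⟨hm, ?_⟩
    have := S.inj (S.normal.conj_mem m hm g) hm h'
    exact mul_inv_eq_iff_eq_mul.mp this
  · rintro ⟨_, h'⟩
    rw [h', mul_inv_cancel_right]

theorem Setup.ncard_fix_orbit (S : Setup G Ω N K p n) {g : G} {ω : Ω} (h : g • ω = ω) :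
    (fixedBy Ω g ∩ orbit N ω).ncard = Nat.card (CN N g) := by
  symm
  have : (fixedBy Ω g ∩ orbit N ω) = (fun m : G => m • ω) '' (CN N g : Set G) := by
    ext x
    constructor
    · rintro ⟨hx, m, rfl⟩
      exact ⟨m, (S.fix_orbit h m.2).mp hx, rfl⟩
    · rintro ⟨m, hm, rfl⟩
      have hmN := (mem_CN.mp hm).1
      exact ⟨(S.fix_orbit h hmN).mpr hm, ⟨m, hmN⟩, rfl⟩
  rw [this, Set.InjOn.ncard_image]
  · rfl
  · intro a ha b hb hab
    exact S.inj (mem_CN.mp ha).1 (mem_CN.mp hb).1 hab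

theorem Setup.NleK (S : Setup G Ω N K p n) : N ≤ K := by
  intro m hm
  rw [S.memK]
  exact fun ω => ⟨⟨m, hm⟩, rfl⟩

theorem Setup.exists_mul (S : Setup G Ω N K p n) {k : G} (hk : k ∈ K) (ω : Ω) :
    ∃ m ∈ N, (m * k) • ω = ω := by
  obtain ⟨m, hm⟩ := (S.memK k).mp hk ω
  refine ⟨m⁻¹, N.inv_mem m.2, ?_⟩
  rw [mul_smul, inv_smul_eq_iff]
  exact hm.symm

theorem Setup.three (S : Setup G Ω N K p n) {k : G} (hk : k ∈ K) (hkN : k ∉ N) :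
    (fixedBy Ω k).ncard = 3 := by
  classical
  have : Fintype N := Fintype.ofFinite _
  choose f hfN hf using S.exists_mul hk
  let F : Ω → N := fun ω => ⟨f ω, hfN ω⟩
  have hF : ∀ ω m, F ω = m ↔ ω ∈ fixedBy Ω ((m : G) * k) := by
    intro ω m
    constructor
    · rintro rfl
      exact hf ω
    · intro h
      apply Subtype.ext
      have h1 := hf ω
      have h2 : ((m : G) * k) • ω = ω := h
      rw [mul_smul] at h1 h2
      exact S.inj (hfN ω) m.2 (h1.trans h2.symm)
  have hsum : ∑ m : N, (fixedBy Ω ((m : G) * k)).ncard = 3 * Nat.card N := by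
    rw [← S.cardΩ, ← Nat.card_congr (Equiv.sigmaFiberEquiv F), Nat.card_sigma]
    refine Finset.sum_congr rfl fun m _ => ?_
    exact Nat.card_congr (Equiv.subtypeEquivRight fun x => (hF x m).symm)
  have hle : ∀ m : N, (fixedBy Ω ((m : G) * k)).ncard ≤ 3 := by
    intro m
    apply S.fix
    intro h
    apply hkN
    rw [mul_eq_one_iff_eq_inv] at h
    have := N.inv_mem m.2
    rw [h, inv_inv] at this
    exact this
  by_contra hne
  have h1 := hle 1
  have : ∑ m : N, (fixedBy Ω ((m : G) * k)).ncard < ∑ m : N, 3 := by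
    apply Finset.sum_lt_sum
    · intro i _; exact hle i
    · refine ⟨1, Finset.mem_univ _, ?_⟩
      simp only [OneMemClass.coe_one, one_mul] at h1 ⊢
      omega
  rw [hsum] at this
  simp at this
  omega

theorem Setup.exists_fix (S : Setup G Ω N K p n) {k : G} (hk : k ∈ K) (hkN : k ∉ N) :
    ∃ ω : Ω, k • ω = ω := by
  have h := S.three hk hkN
  have : (fixedBy Ω k).Nonempty := by
    rw [← Set.ncard_pos]; omega
  exact this

theorem Setup.unique1 (S : Setup G Ω N K p n) {k : G} (hc : CN N k = ⊥)
    {ω ω' : Ω} (h : k • ω = ω) (h' : k • ω' = ω') (ho : ω' ∈ orbit N ω) : ω' = ω := by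
  obtain ⟨m, rfl⟩ := ho
  have := (S.fix_orbit h m.2).mp h'
  rw [hc, Subgroup.mem_bot] at this
  show (m : G) • ω = ω
  rw [this, one_smul]

theorem Setup.type1 (S : Setup G Ω N K p n) {k : G} (hk : k ∈ K) (hkN : k ∉ N)
    (hc : CN N k = ⊥) (ω : Ω) : ∃ ω' ∈ orbit N ω, k • ω' = ω' := by
  classical
  let B := {s : Set Ω | IsOrbitOf G Ω N s}
  let bl : fixedBy Ω k → B := fun ω => ⟨orbit N ω.1, ω.1, rfl⟩
  have hinj : Function.Injective bl := by
    intro a b h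
    have h1 := congrArg Subtype.val h
    exact Subtype.ext (S.unique1 hc b.2 a.2 (orbit_eq_iff.mp h1))
  have hc : Nat.card (fixedBy Ω k) = Nat.card B := (S.three hk hkN).trans S.orb.symm
  have := (Function.Injective.bijective_of_nat_card_le hinj hc.ge).2
  obtain ⟨x, hx⟩ := this ⟨orbit N ω, ω, rfl⟩
  have h1 := congrArg Subtype.val hx
  exact ⟨x, orbit_eq_iff.mp h1, x.2⟩

theorem Setup.type3 (S : Setup G Ω N K p n) {k : G} (hk : k ∈ K) (hkN : k ∉ N)
    (hc : CN N k ≠ ⊥) :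
    Nat.card (CN N k) = 3 ∧ ∀ ω ω' : Ω, k • ω = ω → k • ω' = ω' → ω' ∈ orbit N ω := by
  have h3 := S.three hk hkN
  have hc2 : 2 ≤ Nat.card (CN N k) := by
    have := (Subgroup.one_lt_card_iff_ne_bot _).mpr hc
    omega
  have h2 : ∀ ω ω' : Ω, k • ω = ω → k • ω' = ω' → ω' ∈ orbit N ω := by
    intro ω ω' h h'
    by_contra hn
    have hd : Disjoint (fixedBy Ω k ∩ orbit N ω) (fixedBy Ω k ∩ orbit N ω') := by
      rw [Set.disjoint_left]
      rintro x ⟨_, hx⟩ ⟨_, hx'⟩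
      apply hn
      rw [← orbit_eq_iff] at hx hx' ⊢
      rw [← hx, ← hx']
    have := Set.ncard_union_eq hd
    have hle := Set.ncard_le_ncard (s := (fixedBy Ω k ∩ orbit N ω) ∪ (fixedBy Ω k ∩ orbit N ω'))
      (t := fixedBy Ω k) (by
        rintro x (hx | hx) <;> exact hx.1) (Set.toFinite _)
    rw [S.ncard_fix_orbit h, S.ncard_fix_orbit h'] at this
    omega
  refine ⟨?_, h2⟩
  obtain ⟨ω, hω⟩ := S.exists_fix hk hkN
  rw [← S.ncard_fix_orbit hω, ← h3]
  congr 1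
  ext x
  exact ⟨fun h => h.1, fun h => ⟨h, h2 ω x hω h⟩⟩

theorem Setup.CN_mul (S : Setup G Ω N K p n) {k m : G} (hm : m ∈ N) : CN N (m * k) = CN N k := by
  ext x
  rw [mem_CN, mem_CN]
  refine and_congr_right fun hx => ?_
  rw [mul_assoc, ← mul_assoc x, S.comm x hx m hm, mul_assoc m, mul_right_inj]

end

theorem normP {Y : Type*} [Group Y] [Finite Y] (h3 : 3 ∣ Nat.card Y) (h9 : ¬ 9 ∣ Nat.card Y)
    (hA : ∀ r : ℕ, r.Prime → r ≠ 3 → ∀ S : Subgroup Y, IsPGroup r S → S ≠ ⊥ →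
      ∀ x : Y, orderOf x = 3 → (∀ s ∈ S, x⁻¹ * s * x ∈ S) → False)
    (hD : 2 ∣ Nat.card Y → ∃ D : Subgroup Y, D.Normal ∧ IsPGroup 3 D ∧
      ∃ i : Y, orderOf i = 2 ∧ ∀ y, i * y * i⁻¹ * y⁻¹ ∈ D) :
    ∃ P : Subgroup Y, P.Normal ∧ Nat.card P = 3 ∧ ∀ y, (∀ x ∈ P, x * y = y * x) → y ∈ P := by
  have f3 : Fact (Nat.Prime 3) := ⟨Nat.prime_three⟩
  obtain ⟨Q⟩ : Nonempty (Sylow 3 Y) := inferInstance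
  have card3 : ∀ D : Subgroup Y, IsPGroup 3 D → D ≠ ⊥ → Nat.card D = 3 := by
    intro D hD3 hne
    obtain ⟨k, hk⟩ := IsPGroup.iff_card.mp hD3
    have h1 := (Subgroup.one_lt_card_iff_ne_bot _).mpr hne
    have h2 : ¬ 2 ≤ k := fun h2 => h9 (by
      have : 3 ^ 2 ∣ Nat.card D := hk ▸ pow_dvd_pow 3 h2
      exact this.trans (Subgroup.card_subgroup_dvd_card D))
    interval_cases k
    · omega
    · omega
  have hQne : (Q : Subgroup Y) ≠ ⊥ := Q.ne_bot_of_dvd_card h3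
  have hQ3 : Nat.card Q = 3 := card3 Q Q.2 hQne
  suffices hex : ∃ P : Subgroup Y, P.Normal ∧ Nat.card P = 3 by
    obtain ⟨P, hPn, hP⟩ := hex
    refine ⟨P, hPn, hP, ?_⟩
    intro y hy
    obtain ⟨x, hx⟩ := exists_prime_orderOf_dvd_card' (G := P) 3 (by rw [hP])
    have hx' : orderOf (x : Y) = 3 := by rw [Subgroup.orderOf_coe]; exact hx
    have hC3 : IsPGroup 3 (Subgroup.centralizer (P : Set Y)) := by
      rw [isPGroup_iff_primeFactors_card_subset (by norm_num)]
      intro r hr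
      have hrp := Nat.prime_of_mem_primeFactors hr
      by_contra hr3
      have hr3' : r ≠ 3 := by
        rintro rfl
        exact hr3 (by simp [Nat.prime_three])
      have fr : Fact r.Prime := ⟨hrp⟩
      obtain ⟨g, hg⟩ := exists_prime_orderOf_dvd_card' (G := Subgroup.centralizer (P : Set Y)) r
        (Nat.dvd_of_mem_primeFactors hr)
      have hg' : orderOf (g : Y) = r := by rw [Subgroup.orderOf_coe]; exact hg
      refine hA r hrp hr3' (Subgroup.zpowers (g : Y)) ?_ ?_ x hx' ?_
      · exact IsPGroup.of_card (n := 1) (by rw [Nat.card_zpowers, hg', pow_one])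
      · rw [Ne, Subgroup.zpowers_eq_bot]
        intro h1
        rw [h1, orderOf_one] at hg'
        exact hrp.one_lt.ne hg'
      · rintro s ⟨j, rfl⟩
        have hc : (x : Y) * g = g * x := Subgroup.mem_centralizer_iff.mp g.2 x x.2
        have hc' : (x : Y) * (g : Y) ^ j = (g : Y) ^ j * x := (Commute.zpow_right hc j)
        refine ⟨j, ?_⟩
        show (g : Y) ^ j = (x : Y)⁻¹ * (g : Y) ^ j * x
        rw [mul_assoc, ← hc', inv_mul_cancel_left]
    have hPC : P ≤ Subgroup.centralizer (P : Set Y) := by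
      have : IsCyclic P := isCyclic_of_prime_card hP
      have : IsMulCommutative P := IsCyclic.isMulCommutative
      intro a ha
      rw [Subgroup.mem_centralizer_iff]
      intro b hb
      exact congrArg Subtype.val (mul_comm' (⟨b, hb⟩ : P) ⟨a, ha⟩)
    have hCne : Subgroup.centralizer (P : Set Y) ≠ ⊥ := by
      intro h
      rw [h, le_bot_iff] at hPC
      rw [hPC] at hP
      simp at hP
    have hcard := card3 _ hC3 hCne
    have : P = Subgroup.centralizer (P : Set Y) := Subgroup.eq_of_le_of_card_ge hPC (by omega)
    rw [this, Subgroup.mem_centralizer_iff]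
    exact hy
  by_cases h2 : 2 ∣ Nat.card Y
  · obtain ⟨D, hDn, hD3, i, hi, hiD⟩ := hD h2
    refine ⟨D, hDn, card3 D hD3 ?_⟩
    rintro rfl
    obtain ⟨x, hx⟩ := exists_prime_orderOf_dvd_card' (G := Y) 3 h3
    refine hA 2 Nat.prime_two (by norm_num) (Subgroup.zpowers i) ?_ ?_ x hx ?_
    · exact IsPGroup.of_card (n := 1) (by rw [Nat.card_zpowers, hi, pow_one])
    · rw [Ne, Subgroup.zpowers_eq_bot]
      rintro rfl
      simp at hi
    · rintro s ⟨j, rfl⟩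
      have h1 := hiD x
      rw [Subgroup.mem_bot] at h1
      have hc : x * i = i * x := by
        rw [mul_inv_eq_one, mul_inv_eq_iff_eq_mul] at h1
        exact h1.symm
      have hc' : x * i ^ j = i ^ j * x := (Commute.zpow_right hc j)
      refine ⟨j, ?_⟩
      show i ^ j = x⁻¹ * i ^ j * x
      rw [mul_assoc, ← hc', inv_mul_cancel_left]
  · have hmf : (Nat.card Y).minFac = 3 := by
      have hle := Nat.minFac_le_of_dvd (le_of_lt (by norm_num : 2 < 3)) h3
      have hne1 : Nat.card Y ≠ 1 := fun h => by rw [h] at h3; omega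
      have hpr := Nat.minFac_prime hne1
      have h22 : (Nat.card Y).minFac ≠ 2 := fun h => h2 (h ▸ Nat.minFac_dvd _)
      have := hpr.two_le
      omega
    have hcyc : IsCyclic Q := isCyclic_of_prime_card hQ3
    have hcomp := hcyc.isComplement' (P := Q) hmf
    set M := (MonoidHom.transferSylow Q (hcyc.normalizer_le_centralizer hmf)).ker with hM
    have hM3 : ¬ 3 ∣ Nat.card M := MonoidHom.not_dvd_card_ker_transferSylow Q _
    have hMbot : M = ⊥ := by
      by_contra hne
      have h1 := (Subgroup.one_lt_card_iff_ne_bot _).mpr hne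
      obtain ⟨r, hrp, hr⟩ := Nat.exists_prime_and_dvd h1.ne'
      have hr3 : r ≠ 3 := by rintro rfl; exact hM3 hr
      have fr : Fact r.Prime := ⟨hrp⟩
      obtain ⟨S⟩ : Nonempty (Sylow r M) := inferInstance
      have hfr := S.normalizer_sup_eq_top
      have hSne : (S : Subgroup M) ≠ ⊥ := S.ne_bot_of_dvd_card hr
      have hd : 3 ∣ Nat.card (Subgroup.normalizer (((S : Subgroup M).map M.subtype : Subgroup Y) : Set Y)) := by
        have h4 : Nat.card Y ∣ Nat.card (Subgroup.normalizer (((S : Subgroup M).map M.subtype : Subgroup Y) : Set Y)) * Nat.card M := by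
          rw [← Subgroup.card_mul_index M, mul_comm]
          apply Nat.mul_dvd_mul_right
          rw [← Subgroup.relIndex_top_right, ← hfr, Subgroup.relIndex_sup_right]
          exact Subgroup.relIndex_dvd_card _ _
        exact (Nat.Prime.dvd_mul Nat.prime_three |>.mp (h3.trans h4)).resolve_right hM3
      obtain ⟨x, hx⟩ := exists_prime_orderOf_dvd_card' (G := Subgroup.normalizer (((S : Subgroup M).map M.subtype : Subgroup Y) : Set Y)) 3 hd
      refine hA r hrp hr3 ((S : Subgroup M).map M.subtype) (S.2.map _) ?_ x
        (by rw [Subgroup.orderOf_coe]; exact hx) ?_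
      · rwa [Ne, Subgroup.map_eq_bot_iff_of_injective _ M.subtype_injective]
      · intro s hs
        have := Subgroup.mem_normalizer_iff''.mp x.2 s
        exact this.mp hs
    refine ⟨⊤, inferInstance, ?_⟩
    have := hcomp.card_mul_card
    rw [hMbot, Subgroup.card_bot, one_mul] at this
    rw [Subgroup.card_top, ← this]; exact hQ3

theorem centralizer_index {X : Type*} [Group X] [Finite X] (P : Subgroup X) [P.Normal]
    (hP : Nat.card P = 3) :
    (Subgroup.centralizer (P : Set X)).index ∣ 2 := by
  have f3 : Fact (Nat.Prime 3) := ⟨Nat.prime_three⟩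
  have hcyc : IsCyclic P := isCyclic_of_prime_card hP
  have hker : (MulAut.conjNormal : X →* MulAut P).ker = Subgroup.centralizer (P : Set X) := by
    ext x
    rw [MonoidHom.mem_ker, Subgroup.mem_centralizer_iff]
    constructor
    · intro h a ha
      have := congrArg (fun t : MulAut P => ((t ⟨a, ha⟩ : P) : X)) h
      simp only [MulAut.conjNormal_apply, MulAut.one_apply] at this
      exact (mul_inv_eq_iff_eq_mul.mp this).symm
    · intro h
      ext a
      rw [MulAut.conjNormal_apply, MulAut.one_apply, ← h a a.2, mul_inv_cancel_right]
  rw [← hker, Subgroup.index_ker]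
  have : Nat.card (MulAut P) = 2 := by
    rw [hcyc.card_mulAut, hP]; rfl
  rw [← this]
  exact Subgroup.card_subgroup_dvd_card _

theorem exists_compl {X : Type*} [Group X] [Finite X] (P K A : Subgroup X) [P.Normal] [K.Normal]
    [A.Normal] (hPK : P ≤ K) (hKA : K ≤ A) (hP : Nat.card P = 3)
    (hCK : ∀ y ∈ K, (∀ x ∈ P, x * y = y * x) → y ∈ P)
    (hA : A.index ∣ 2) (hKA3 : K.relIndex A = 3)
    (hcube : ∀ a ∈ A, a ∉ K → a ^ 3 ∈ P → a ^ 3 = 1) :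
    ∃ R : Subgroup X, R.Normal ∧ R ≤ A ∧ R ⊓ K = ⊥ ∧ Nat.card R = 3 := by
  classical
  have f3 : Fact (Nat.Prime 3) := ⟨Nat.prime_three⟩
  have f2 : Fact (Nat.Prime 2) := ⟨Nat.prime_two⟩
  set C := Subgroup.centralizer (P : Set X) with hC
  have hCi := centralizer_index P hP
  have hPC : P ≤ C := by
    have : IsCyclic P := isCyclic_of_prime_card hP
    have : IsMulCommutative P := IsCyclic.isMulCommutative
    intro a ha
    rw [hC, Subgroup.mem_centralizer_iff]
    intro b hb
    exact congrArg Subtype.val (mul_comm' (⟨b, hb⟩ : P) ⟨a, ha⟩)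
  have hCK' : C ⊓ K = P := by
    apply le_antisymm
    · rintro y ⟨h1, h2⟩
      exact hCK y h2 (Subgroup.mem_centralizer_iff.mp h1)
    · exact le_inf hPC hPK
  set T := C ⊓ A with hT
  have hTn : T.Normal := inferInstance
  have hTK : K ⊓ T = P := by
    rw [hT, ← inf_assoc, inf_comm K C, hCK']
    exact inf_eq_left.mpr (hPK.trans hKA)
  have hPT : P ≤ T := le_inf hPC (hPK.trans hKA)
  have cube_mem : ∀ a ∈ A, a ^ 3 ∈ K := by
    intro a ha
    have := Subgroup.pow_index_mem (K.subgroupOf A) ⟨a, ha⟩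
    rw [show (K.subgroupOf A).index = 3 from hKA3] at this
    exact this
  -- an element of T outside K
  obtain ⟨t, htT, htK⟩ : ∃ t ∈ T, t ∉ K := by
    have : ¬ A ≤ K := fun h => by
      rw [Subgroup.relIndex_eq_one.mpr h] at hKA3; omega
    obtain ⟨a, ha, haK⟩ := SetLike.not_le_iff_exists.mp this
    refine ⟨a ^ 2, ⟨?_, A.pow_mem ha 2⟩, ?_⟩
    · have h1 := Subgroup.pow_index_mem C a
      obtain ⟨c, hc⟩ := hCi
      rw [hc, pow_mul]
      exact C.pow_mem h1 c
    · intro h2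
      apply haK
      have h3 := cube_mem a ha
      have : a = a ^ 3 * (a ^ 2)⁻¹ := by group
      rw [this]
      exact K.mul_mem h3 (K.inv_mem h2)
  have hTcard : Nat.card T = 3 ^ 2 := by
    have h1 : P.relIndex T = 3 := by
      have e : P.relIndex T = K.relIndex T := by
        rw [← hTK, Subgroup.inf_relIndex_right]
      have hd : K.relIndex T ∣ 3 := by
        rw [← hKA3]
        rw [← Subgroup.relIndex_sup_left T K]
        exact Dvd.intro _ (Subgroup.relIndex_mul_relIndex K (K ⊔ T) A le_sup_left
          (sup_le hKA inf_le_right))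
      rw [e]
      rcases (Nat.dvd_prime Nat.prime_three).mp hd with h | h
      · exact absurd (Subgroup.relIndex_eq_one.mp h htT) htK
      · exact h
    have := Subgroup.card_mul_index (P.subgroupOf T)
    rw [show (P.subgroupOf T).index = 3 from h1,
      Nat.card_congr (Subgroup.subgroupOfEquivOfLe hPT).toEquiv, hP] at this
    omega
  have hTcomm : ∀ a ∈ T, ∀ b ∈ T, a * b = b * a := by
    intro a ha b hb
    have := IsPGroup.isMulCommutative_of_card_eq_prime_sq hTcard
    exact congrArg Subtype.val (mul_comm' (⟨a, ha⟩ : T) ⟨b, hb⟩)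
  have hTcube : ∀ a ∈ T, a ∉ K → a ^ 3 = 1 := by
    intro a ha haK
    apply hcube a ha.2 haK
    rw [← hTK]
    exact ⟨cube_mem a ha.2, T.pow_mem ha 3⟩
  have hcard : ∃ m, Nat.card X = 9 * 2 ^ m := by
    have h1 := Subgroup.card_mul_index A
    have h2 : Nat.card K * 3 = Nat.card A := by
      have := Subgroup.card_mul_index (K.subgroupOf A)
      rwa [show (K.subgroupOf A).index = 3 from hKA3,
        Nat.card_congr (Subgroup.subgroupOfEquivOfLe hKA).toEquiv] at this
    have h3 : Nat.card P * P.relIndex K = Nat.card K := by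
      have := Subgroup.card_mul_index (P.subgroupOf K)
      rwa [Nat.card_congr (Subgroup.subgroupOfEquivOfLe hPK).toEquiv] at this
    have h4 : P.relIndex K ∣ 2 := by
      rw [← hCK', Subgroup.inf_relIndex_right]
      exact (Subgroup.relIndex_dvd_index_of_normal C K).trans hCi
    rcases (Nat.dvd_prime Nat.prime_two).mp h4 with h4 | h4 <;>
    rcases (Nat.dvd_prime Nat.prime_two).mp hA with h5 | h5 <;>
    rw [h4, hP] at h3 <;> rw [h5] at h1
    · exact ⟨0, by omega⟩
    · exact ⟨1, by omega⟩
    · exact ⟨1, by omega⟩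
    · exact ⟨2, by omega⟩
  -- the set of complements
  let CC : Set (Subgroup X) := {R | R ≤ T ∧ Nat.card R = 3 ∧ R ⊓ K = ⊥}
  have htx : ∀ x ∈ P, t * x ∉ K := fun x hx h =>
    htK (by simpa using K.mul_mem h (K.inv_mem (hPK hx)))
  have htx3 : ∀ x ∈ P, Nat.card (Subgroup.zpowers (t * x)) = 3 := by
    intro x hx
    rw [Nat.card_zpowers]
    refine orderOf_eq_prime (hTcube _ (T.mul_mem htT (hPT hx)) (htx x hx)) ?_
    intro h
    exact htx x hx (h ▸ K.one_mem)
  have hCCcard : Nat.card CC = 3 := by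
    rw [← hP]
    symm
    refine Nat.card_congr (Equiv.ofBijective
      (fun x : P => (⟨Subgroup.zpowers (t * x), ?_, htx3 x x.2, ?_⟩ : CC)) ⟨?_, ?_⟩)
    · rw [Subgroup.zpowers_le]
      exact T.mul_mem htT (hPT x.2)
    · have hd : Nat.card (Subgroup.zpowers (t * (x : X)) ⊓ K : Subgroup X) ∣ 3 := by
        rw [← htx3 x x.2]
        exact Subgroup.card_dvd_of_le inf_le_left
      rcases (Nat.dvd_prime Nat.prime_three).mp hd with h | h
      · exact Subgroup.card_eq_one.mp h
      · exfalso
        have h1 := Subgroup.eq_of_le_of_card_ge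
          (inf_le_left : (Subgroup.zpowers (t * (x : X)) ⊓ K : Subgroup X) ≤ _)
          (by rw [h, htx3 x x.2])
        have h2 : t * (x : X) ∈ (Subgroup.zpowers (t * (x : X)) ⊓ K : Subgroup X) := by
          rw [h1]; exact Subgroup.mem_zpowers _
        exact htx x x.2 h2.2
    · intro x y h
      have h1 : Subgroup.zpowers (t * (x : X)) = Subgroup.zpowers (t * (y : X)) :=
        congrArg Subtype.val h
      have hb : Subgroup.zpowers (t * (y : X)) ⊓ K = ⊥ := by
        have hd : Nat.card (Subgroup.zpowers (t * (y : X)) ⊓ K : Subgroup X) ∣ 3 := by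
          rw [← htx3 y y.2]
          exact Subgroup.card_dvd_of_le inf_le_left
        rcases (Nat.dvd_prime Nat.prime_three).mp hd with h | h
        · exact Subgroup.card_eq_one.mp h
        · exfalso
          have h1 := Subgroup.eq_of_le_of_card_ge
            (inf_le_left : (Subgroup.zpowers (t * (y : X)) ⊓ K : Subgroup X) ≤ _)
            (by rw [h, htx3 y y.2])
          have h2 : t * (y : X) ∈ (Subgroup.zpowers (t * (y : X)) ⊓ K : Subgroup X) := by
            rw [h1]; exact Subgroup.mem_zpowers _
          exact htx y y.2 h2.2
      have h2 : (x : X)⁻¹ * y ∈ Subgroup.zpowers (t * (y : X)) ⊓ K := by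
        refine ⟨?_, hPK (P.mul_mem (P.inv_mem x.2) y.2)⟩
        have hx : t * (x : X) ∈ Subgroup.zpowers (t * (y : X)) := by
          rw [← h1]; exact Subgroup.mem_zpowers _
        have := Subgroup.mul_mem _ (Subgroup.inv_mem _ hx) (Subgroup.mem_zpowers (t * (y : X)))
        have e : (t * (x : X))⁻¹ * (t * y) = (x : X)⁻¹ * y := by group
        rwa [e] at this
      rw [hb, Subgroup.mem_bot, inv_mul_eq_one] at h2
      exact Subtype.ext h2
    · rintro ⟨R, hRT, hR3, hRK⟩
      let g : R × P → T := fun z => ⟨z.1 * z.2, T.mul_mem (hRT z.1.2) (hPT z.2.2)⟩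
      have hg : Function.Injective g := by
        rintro ⟨a, x⟩ ⟨b, y⟩ h
        have h1 : (a : X) * x = b * y := congrArg Subtype.val h
        have h2 : (b : X)⁻¹ * a = y * (x : X)⁻¹ := by
          rw [eq_mul_inv_iff_mul_eq, mul_assoc, h1, inv_mul_cancel_left]
        have h3 : (b : X)⁻¹ * a ∈ R ⊓ K := by
          refine ⟨R.mul_mem (R.inv_mem b.2) a.2, ?_⟩
          rw [h2]
          exact hPK (P.mul_mem y.2 (P.inv_mem x.2))
        rw [hRK, Subgroup.mem_bot] at h3
        have hab : b = a := Subtype.ext (inv_mul_eq_one.mp h3)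
        rw [h3] at h2
        have hxy : y = x := Subtype.ext (mul_inv_eq_one.mp h2.symm)
        rw [hab, hxy]
      have hs := (Function.Injective.bijective_of_nat_card_le hg
        (by rw [Nat.card_prod, hR3, hP, hTcard]; norm_num)).2
      obtain ⟨⟨r, x⟩, hrx⟩ := hs ⟨t, htT⟩
      have h1 : (r : X) * x = t := congrArg Subtype.val hrx
      refine ⟨x⁻¹, Subtype.ext ?_⟩
      have h2 : t * ((x⁻¹ : P) : X) = r := by
        rw [← h1]; simp
      apply Subgroup.eq_of_le_of_card_ge
      · show Subgroup.zpowers (t * ((x⁻¹ : P) : X)) ≤ R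
        rw [h2, Subgroup.zpowers_le]
        exact r.2
      · show Nat.card R ≤ Nat.card (Subgroup.zpowers (t * ((x⁻¹ : P) : X)))
        rw [hR3, htx3 _ (x⁻¹).2]
  obtain ⟨S⟩ : Nonempty (Sylow 2 X) := inferInstance
  let _ : MulAction S CC :=
    { smul := fun s R => ⟨MulAut.conj (s : X) • (R : Subgroup X), by
        obtain ⟨h1, h2, h3⟩ := R.2
        refine ⟨?_, ?_, ?_⟩
        · rintro _ ⟨r, hr, rfl⟩
          exact hTn.conj_mem r (h1 hr) s
        · rw [← h2]
          exact Nat.card_congr (Subgroup.equivSMul _ _).symm.toEquiv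
        · rw [eq_bot_iff]
          rintro _ ⟨⟨r, hr, rfl⟩, hrK⟩
          have hrK' : (s : X) * r * (s : X)⁻¹ ∈ K := hrK
          have h4 : r ∈ (R : Subgroup X) ⊓ K := by
            refine ⟨hr, ?_⟩
            have := (inferInstance : K.Normal).conj_mem _ hrK' (s : X)⁻¹
            have e : (s : X)⁻¹ * ((s : X) * r * (s : X)⁻¹) * (s : X)⁻¹⁻¹ = r := by group
            rwa [e] at this
          rw [h3, Subgroup.mem_bot] at h4
          rw [h4]
          simp⟩
      one_smul := fun R => Subtype.ext (by
        show MulAut.conj ((1 : S) : X) • (R : Subgroup X) = R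
        simp)
      mul_smul := fun a b R => Subtype.ext (by
        show MulAut.conj ((a * b : S) : X) • (R : Subgroup X) =
          MulAut.conj (a : X) • MulAut.conj (b : X) • (R : Subgroup X)
        rw [smul_smul, ← map_mul]; rfl) }
  obtain ⟨R, hR⟩ := S.2.nonempty_fixed_point_of_prime_not_dvd_card CC (by rw [hCCcard]; norm_num)
  refine ⟨R, ?_, R.2.1.trans inf_le_right, R.2.2.2, R.2.2.1⟩
  have hSR : ∀ s ∈ (S : Subgroup X), ∀ r ∈ (R : Subgroup X), s * r * s⁻¹ ∈ (R : Subgroup X) := by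
    intro s hs r hr
    have h1 : MulAut.conj s • (R : Subgroup X) = R := congrArg Subtype.val (hR ⟨s, hs⟩)
    have h2 : MulAut.conj s • r ∈ MulAut.conj s • (R : Subgroup X) :=
      Subgroup.smul_mem_pointwise_smul _ _ _ hr
    rw [h1] at h2
    exact h2
  have hSN : (S : Subgroup X) ≤ Subgroup.normalizer ((R : Subgroup X) : Set X) := by
    intro s hs
    rw [Subgroup.mem_normalizer_iff]
    intro r
    refine ⟨fun h => hSR s hs r h, fun h => ?_⟩
    have := hSR s⁻¹ (Subgroup.inv_mem _ hs) _ h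
    have e : s⁻¹ * (s * r * s⁻¹) * s⁻¹⁻¹ = r := by group
    rwa [e] at this
  have hTR : ∀ s ∈ T, ∀ r ∈ (R : Subgroup X), s * r * s⁻¹ ∈ (R : Subgroup X) := by
    intro s hs r hr
    rwa [hTcomm s hs r (R.2.1 hr), mul_inv_cancel_right]
  have hTN : T ≤ Subgroup.normalizer ((R : Subgroup X) : Set X) := by
    intro s hs
    rw [Subgroup.mem_normalizer_iff]
    intro r
    refine ⟨fun h => hTR s hs r h, fun h => ?_⟩
    have := hTR s⁻¹ (Subgroup.inv_mem _ hs) _ h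
    have e : s⁻¹ * (s * r * s⁻¹) * s⁻¹⁻¹ = r := by group
    rwa [e] at this
  rw [← Subgroup.normalizer_eq_top_iff]
  apply Subgroup.eq_top_of_le_card
  apply Nat.le_of_dvd Nat.card_pos
  obtain ⟨m, hm⟩ := hcard
  rw [hm]
  apply Nat.Coprime.mul_dvd_of_dvd_of_dvd
  · exact Nat.Coprime.pow_right m (by norm_num)
  · have := Subgroup.card_dvd_of_le hTN
    rw [hTcard] at this
    exact this
  · refine dvd_trans ?_ (Subgroup.card_dvd_of_le hSN)
    exact S.pow_dvd_card_of_pow_dvd_card ⟨9, by rw [hm, mul_comm]⟩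

section
variable {G Ω : Type*} [Group G] [Finite G] [MulAction G Ω] [Finite Ω] {N K : Subgroup G} {p n : ℕ}

theorem Setup.r_fix (S : Setup G Ω N K p n) {r : ℕ} (hr : r.Prime) (hrp : r ≠ p)
    (Q : Subgroup G) (hQK : Q ≤ K) (hQ : IsPGroup r Q) (ω : Ω) :
    ∃ ω' ∈ orbit N ω, ∀ s ∈ Q, s • ω' = ω' := by
  have fr : Fact r.Prime := ⟨hr⟩
  let _ : MulAction Q (orbit N ω) :=
    { smul := fun s x => ⟨(s : G) • (x : Ω), by
        have h1 := (S.memK s).mp (hQK s.2) x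
        rw [← orbit_eq_iff] at h1 ⊢
        rw [h1, orbit_eq_iff]
        exact x.2⟩
      one_smul := fun x => Subtype.ext (one_smul G (x : Ω))
      mul_smul := fun a b x => Subtype.ext (mul_smul (a : G) (b : G) (x : Ω)) }
  obtain ⟨x, hx⟩ := hQ.nonempty_fixed_point_of_prime_not_dvd_card (orbit N ω) (by
    rw [S.card_orbit, S.card]
    intro h
    exact hrp ((Nat.prime_dvd_prime_iff_eq hr S.prime).mp (hr.dvd_of_dvd_pow h)))
  exact ⟨x, x.2, fun s hs => congrArg Subtype.val (hx ⟨s, hs⟩)⟩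

theorem Setup.p_dvd (S : Setup G Ω N K p n) : p ∣ Nat.card N := by
  have h1 := (Subgroup.one_lt_card_iff_ne_bot _).mpr S.ne_bot
  rw [S.card] at h1 ⊢
  apply dvd_pow_self
  rintro rfl
  simp at h1

theorem Setup.p_CN (S : Setup G Ω N K p n) {x : G} (hx : IsPGroup p (Subgroup.zpowers x)) :
    CN N x ≠ ⊥ := by
  have fr : Fact p.Prime := ⟨S.prime⟩
  have := S.normal
  let _ : MulAction (Subgroup.zpowers x) N :=
    MulAction.compHom N ((MulAut.conjNormal : G →* MulAut N).comp (Subgroup.zpowers x).subtype)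
  have hsm : ∀ (y : Subgroup.zpowers x) (m : N), ((y • m : N) : G) = y * m * (y : G)⁻¹ :=
    fun y m => MulAut.conjNormal_apply (y : G) m
  obtain ⟨b, hb, hb1⟩ := hx.exists_fixed_point_of_prime_dvd_card_of_fixed_point N S.p_dvd
    (a := 1) (by
      intro y
      apply Subtype.ext
      rw [hsm]; simp)
  intro h
  have : (b : G) ∈ CN N x := by
    rw [mem_CN]
    refine ⟨b.2, ?_⟩
    have h1 := congrArg Subtype.val (hb ⟨x, Subgroup.mem_zpowers x⟩)
    rw [hsm] at h1
    exact mul_inv_eq_iff_eq_mul.mp h1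
  rw [h, Subgroup.mem_bot] at this
  exact hb1 (Subtype.ext this.symm)

theorem Setup.notN (S : Setup G Ω N K p n) {x : G} (hx : x ≠ 1) {ω : Ω} (h : x • ω = ω) : x ∉ N :=
  fun hN => S.semi x hN hx ω h

theorem Setup.exists_other (S : Setup G Ω N K p n) (ω : Ω) : ∃ ω' : Ω, ω' ∉ orbit N ω := by
  by_contra! h
  have h1 := S.cardΩ
  have h2 := S.card_orbit ω
  have : orbit N ω = Set.univ := Set.eq_univ_of_forall h
  rw [this, Nat.card_univ] at h2
  have : 0 < Nat.card N := Nat.card_pos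
  omega

theorem Setup.nonempty (S : Setup G Ω N K p n) : Nonempty Ω := by
  have h1 := S.cardΩ
  have : 0 < Nat.card N := Nat.card_pos
  exact (Nat.card_pos_iff.mp (by omega : 0 < Nat.card Ω)).1

theorem Setup.all_blocks (S : Setup G Ω N K p n) {x : G} (hx : x ∈ K) (hx1 : x ≠ 1)
    (h : ∀ ω : Ω, ∃ ω' ∈ orbit N ω, x • ω' = ω') : CN N x = ⊥ := by
  obtain ⟨ω⟩ := S.nonempty
  obtain ⟨a, ha, hxa⟩ := h ω
  by_contra hc
  obtain ⟨ω', hω'⟩ := S.exists_other ω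
  obtain ⟨b, hb, hxb⟩ := h ω'
  have := (S.type3 hx (S.notN hx1 hxa) hc).2 a b hxa hxb
  apply hω'
  rw [← orbit_eq_iff] at ha hb this ⊢
  rw [← hb, this, ha]

theorem Setup.r_elt (S : Setup G Ω N K p n) {r : ℕ} (hr : r.Prime) (hrp : r ≠ p)
    {y : G} (hy : y ∈ K) (hyr : orderOf y = r) : CN N y = ⊥ := by
  apply S.all_blocks hy
  · rintro rfl
    rw [orderOf_one] at hyr
    exact hr.one_lt.ne hyr
  · intro ω
    obtain ⟨a, ha, h⟩ := S.r_fix hr hrp (Subgroup.zpowers y) (by rwa [Subgroup.zpowers_le])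
      (IsPGroup.of_card (n := 1) (by rw [Nat.card_zpowers, hyr, pow_one])) ω
    exact ⟨a, ha, h y (Subgroup.mem_zpowers y)⟩

theorem Setup.lemmaA (S : Setup G Ω N K p n) {r : ℕ} (hr : r.Prime) (hrp : r ≠ p)
    (Q : Subgroup G) (hQK : Q ≤ K) (hQ : IsPGroup r Q) (hQ1 : Q ≠ ⊥) {x : G} (hx : x ∈ K)
    (hxp : orderOf x = p) (hxQ : ∀ s ∈ Q, x⁻¹ * s * x ∈ Q) : False := by
  have hx1 : x ≠ 1 := by
    rintro rfl
    rw [orderOf_one] at hxp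
    exact S.prime.one_lt.ne hxp
  refine S.p_CN (x := x) (IsPGroup.of_card (n := 1) (by rw [Nat.card_zpowers, hxp, pow_one])) ?_
  apply S.all_blocks hx hx1
  intro ω
  obtain ⟨a, ha, h⟩ := S.r_fix hr hrp Q hQK hQ ω
  refine ⟨a, ha, ?_⟩
  obtain ⟨⟨s, hs⟩, hs1'⟩ := Subgroup.ne_bot_iff_exists_ne_one.mp hQ1
  have hs1 : s ≠ 1 := fun h => hs1' (Subtype.ext h)
  have hc : CN N s = ⊥ := by
    apply S.all_blocks (hQK hs) hs1
    intro ω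
    obtain ⟨a, ha, h⟩ := S.r_fix hr hrp Q hQK hQ ω
    exact ⟨a, ha, h s hs⟩
  refine S.unique1 hc (h s hs) ?_ ((S.memK x).mp hx a)
  have := h _ (hxQ s hs)
  rw [mul_smul, mul_smul, inv_smul_eq_iff] at this
  exact this

theorem Setup.burnside (S : Setup G Ω N K p n) (H : Subgroup G) (hHK : H ≤ K) (hHN : H ⊓ N = ⊥) :
    ∃ j, 3 * Nat.card N + 3 * (Nat.card H - 1) = j * Nat.card H := by
  classical
  have : Fintype Ω := Fintype.ofFinite _
  have : Fintype H := Fintype.ofFinite _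
  have hb := MulAction.sum_card_fixedBy_eq_card_orbits_mul_card_group H Ω
  refine ⟨Fintype.card (Quotient (orbitRel H Ω)), ?_⟩
  rw [Nat.card_eq_fintype_card (α := H), ← hb, ← S.cardΩ,
    ← Finset.add_sum_erase _ _ (Finset.mem_univ (1 : H))]
  congr 1
  · rw [← Nat.card_eq_fintype_card]
    have : fixedBy Ω (1 : H) = Set.univ := by ext; simp
    rw [this, Nat.card_univ]
  · rw [Finset.sum_congr rfl (g := fun _ => 3)]
    · simp [mul_comm]
    · intro h hh
      have h1 : (h : G) ∉ N := fun hN => by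
        have : (h : G) ∈ H ⊓ N := ⟨h.2, hN⟩
        rw [hHN, Subgroup.mem_bot] at this
        exact (Finset.mem_erase.mp hh).1 (Subtype.ext this)
      rw [← Nat.card_eq_fintype_card]
      exact S.three (hHK h.2) h1

end

theorem aux1 {G : Type*} [Group G] {i m : G} (hii : i * i = 1)
    (hc : m * (i * m * i) = (i * m * i) * m) : i * (m * (i * m * i)) = (m * (i * m * i)) * i := by
  have e1 : (m * (i * m * i)) * i = m * i * m := by
    calc (m * (i * m * i)) * i = m * i * m * (i * i) := by group
      _ = _ := by rw [hii, mul_one]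
  have e2 : i * (i * m * i * m) = m * i * m := by
    calc i * (i * m * i * m) = (i * i) * (m * i * m) := by simp only [mul_assoc]
      _ = _ := by rw [hii, one_mul]
  rw [e1, hc, e2]

theorem aux2 {G : Type*} [Group G] {i m y : G} (hii : i * i = 1)
    (e1 : i * (y⁻¹ * m * y) * i = (y⁻¹ * m * y)⁻¹) (e2 : i * m * i = m⁻¹) :
    m * (i * y * i * y⁻¹) = i * y * i * y⁻¹ * m := by
  have f1 : i * (y⁻¹ * m * y) = (y⁻¹ * m * y)⁻¹ * i := by
    calc i * (y⁻¹ * m * y) = i * (y⁻¹ * m * y) * (i * i) := by rw [hii, mul_one]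
      _ = i * (y⁻¹ * m * y) * i * i := by simp only [mul_assoc]
      _ = _ := by rw [e1]
  have f2 : m * i = i * m⁻¹ := by
    rw [← e2]
    calc m * i = (i * i) * (m * i) := by rw [hii, one_mul]
      _ = _ := by simp only [mul_assoc]
  calc m * (i * y * i * y⁻¹) = (m * i) * (y * i * y⁻¹) := by simp only [mul_assoc]
    _ = i * m⁻¹ * (y * i * y⁻¹) := by rw [f2]
    _ = i * y * ((y⁻¹ * m * y)⁻¹ * i) * y⁻¹ := by group
    _ = i * y * (i * (y⁻¹ * m * y)) * y⁻¹ := by rw [f1]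
    _ = _ := by group

section
variable {G Ω : Type*} [Group G] [Finite G] [MulAction G Ω] [Finite Ω] {N K : Subgroup G} {p n : ℕ}

theorem Setup.regular (S : Setup G Ω N K p n) (A R : Subgroup G)
    (hfixK : ∀ a ∈ A, ∀ ω : Ω, a • ω ∈ orbit N ω → a ∈ K)
    (hRA : R ≤ A) (hRK : R ⊓ K ≤ N) (hR : Nat.card R = 3 * Nat.card N) : IsRegularOn G Ω R := by
  have h2 : ∀ r ∈ R, r ≠ 1 → ∀ ω : Ω, r • ω ≠ ω := by
    intro r hr hr1 ω h
    have hrK : r ∈ K := hfixK r (hRA hr) ω (by rw [h]; exact mem_orbit_self ω)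
    exact S.notN hr1 h (hRK ⟨hr, hrK⟩)
  refine ⟨?_, h2⟩
  intro ω ω'
  have hinj : Function.Injective (fun r : R => (r : G) • ω) := by
    intro a b hab
    by_contra hne
    refine h2 ((b : G)⁻¹ * a) (R.mul_mem (R.inv_mem b.2) a.2) (fun h' => hne ?_) ω ?_
    · rw [inv_mul_eq_one] at h'; exact Subtype.ext h'.symm
    · have hab' : (a : G) • ω = (b : G) • ω := hab
      rw [mul_smul, hab', inv_smul_smul]
  obtain ⟨r, hr⟩ := (Function.Injective.bijective_of_nat_card_le hinj
    (by rw [hR, S.cardΩ])).2 ω'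
  exact ⟨r, r.2, hr⟩

theorem Setup.struct (S : Setup G Ω N K 3 n) {k : G} (hk : k ∈ K) (hc : CN N k ≠ ⊥) (ω : Ω)
    (hω : k • ω = ω) (hk1 : k ≠ 1) (H : Subgroup G) (hH : H = K ⊓ stabilizer G ω) :
    ¬ 9 ∣ Nat.card H ∧ ∃ P : Subgroup H, P.Normal ∧ Nat.card P = 3 ∧
      ∀ y, (∀ x ∈ P, x * y = y * x) → y ∈ P := by
  have hHK : H ≤ K := hH ▸ inf_le_left
  have hHω : ∀ h ∈ H, h • ω = ω := by
    intro h hh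
    rw [hH] at hh
    exact hh.2
  have hHN : H ⊓ N = ⊥ := by
    rw [eq_bot_iff]
    rintro x ⟨h1, h2⟩
    by_contra hx
    exact S.notN hx (hHω x h1) h2
  have hkH : k ∈ H := by rw [hH]; exact ⟨hk, hω⟩
  have h9 : ¬ 9 ∣ Nat.card H := by
    rintro ⟨c, hcc⟩
    obtain ⟨j, hj⟩ := S.burnside H hHK hHN
    obtain ⟨d, hd⟩ := S.p_dvd
    have hpos : 0 < Nat.card H := Nat.card_pos
    rw [hcc] at hj hpos
    rw [hd, show j * (9 * c) = 9 * (j * c) by ring] at hj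
    generalize j * c = e at hj
    omega
  refine ⟨h9, normP ?_ h9 ?_ ?_⟩
  · have hne : orderOf k ≠ 1 := fun h => hk1 (orderOf_eq_one_iff.mp h)
    obtain ⟨r, hr, hrd⟩ := Nat.exists_prime_and_dvd hne
    have hy : orderOf (k ^ (orderOf k / r)) = r := orderOf_pow_orderOf_div (orderOf_pos k).ne' hrd
    have hr3 : r = 3 := by
      by_contra hr3
      have h1 := S.r_elt hr hr3 (K.pow_mem hk _) hy
      apply hc
      rw [eq_bot_iff, ← h1]
      intro m hm
      rw [mem_CN] at hm ⊢
      exact ⟨hm.1, (Commute.pow_left hm.2 _)⟩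
    rw [hr3] at hrd
    refine hrd.trans ?_
    have := orderOf_dvd_natCard (⟨k, hkH⟩ : H)
    rwa [Subgroup.orderOf_mk] at this
  · intro r hr hr3 Q hQ hQ1 x hx hxQ
    refine S.lemmaA hr hr3 (Q.map H.subtype) ?_ (hQ.map _) ?_ (x := (x : G)) (hHK x.2)
      (by rw [Subgroup.orderOf_coe]; exact hx) ?_
    · rintro _ ⟨y, _, rfl⟩
      exact hHK y.2
    · rwa [Ne, Subgroup.map_eq_bot_iff_of_injective _ H.subtype_injective]
    · rintro _ ⟨s, hs, rfl⟩
      exact ⟨_, hxQ s hs, rfl⟩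
  · intro h2
    have f2 : Fact (Nat.Prime 2) := ⟨Nat.prime_two⟩
    have hNn := S.normal
    obtain ⟨i, hi⟩ := exists_prime_orderOf_dvd_card' (G := H) 2 h2
    have hi' : orderOf (i : G) = 2 := by rw [Subgroup.orderOf_coe]; exact hi
    have hCi := S.r_elt Nat.prime_two (by norm_num) (hHK i.2) hi'
    have hii : (i : G) * i = 1 := by
      have := pow_orderOf_eq_one (i : G)
      rwa [hi', pow_two] at this
    have hinv : (i : G)⁻¹ = i := inv_eq_of_mul_eq_one_left hii
    have hI : ∀ m ∈ N, (i : G) * m * i = m⁻¹ := by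
      intro m hm
      have hcm : (i : G) * m * i ∈ N := by
        have := hNn.conj_mem m hm i
        rwa [hinv] at this
      have : m * ((i : G) * m * i) ∈ CN N i := by
        rw [mem_CN]
        refine ⟨N.mul_mem hm hcm, ?_⟩
        exact aux1 hii (S.comm m hm _ hcm)
      rw [hCi, Subgroup.mem_bot] at this
      exact (inv_eq_of_mul_eq_one_right this).symm
    refine ⟨(Subgroup.centralizer (N : Set G)).subgroupOf H, inferInstance, ?_, i, hi, ?_⟩
    · rw [isPGroup_iff_primeFactors_card_subset (by norm_num)]
      intro r hr
      have hrp := Nat.prime_of_mem_primeFactors hr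
      by_contra hr3
      have hr3' : r ≠ 3 := by
        rintro rfl
        exact hr3 (by simp [Nat.prime_three])
      have fr : Fact r.Prime := ⟨hrp⟩
      obtain ⟨y, hy⟩ := exists_prime_orderOf_dvd_card' r (Nat.dvd_of_mem_primeFactors hr)
      have hy' : orderOf ((y : H) : G) = r := by
        rw [Subgroup.orderOf_coe, Subgroup.orderOf_coe]; exact hy
      have h1 := S.r_elt hrp hr3' (hHK (y : H).2) hy'
      apply S.ne_bot
      rw [eq_bot_iff, ← h1]
      intro m hm
      rw [mem_CN]
      exact ⟨hm, (Subgroup.mem_centralizer_iff.mp y.2 m hm).symm⟩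
    · intro y
      rw [Subgroup.mem_subgroupOf, Subgroup.mem_centralizer_iff]
      intro m hm
      have hm' : (y : G)⁻¹ * m * y ∈ N := by
        have := hNn.conj_mem m hm (y : G)⁻¹
        rwa [inv_inv] at this
      have e1 := hI _ hm'
      have e2 := hI _ hm
      push_cast
      rw [hinv]
      exact aux2 hii e1 e2
end

section
variable {G Ω : Type*} [Group G] [Finite G] [MulAction G Ω] [Finite Ω] {N K : Subgroup G} {n : ℕ}

theorem Setup.caseB (S : Setup G Ω N K 3 n) (A : Subgroup G) (hKn : K.Normal) (hAn : A.Normal)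
    (hKA : K ≤ A) (hAi : A.index ∣ 2) (hKA3 : K.relIndex A = 3)
    (hfixK : ∀ a ∈ A, ∀ ω : Ω, a • ω ∈ orbit N ω → a ∈ K)
    {k : G} (hk : k ∈ K) (hkN : k ∉ N) (hc : CN N k ≠ ⊥) :
    ∃ R : Subgroup G, R.Normal ∧ R ≤ A ∧ R ⊓ K ≤ N ∧ Nat.card R = 3 * Nat.card N := by
  have hNn := S.normal
  have f3 : Fact (Nat.Prime 3) := ⟨Nat.prime_three⟩
  obtain ⟨ω, hω⟩ := S.exists_fix hk hkN
  obtain ⟨H, hH⟩ : ∃ H, H = K ⊓ stabilizer G ω := ⟨_, rfl⟩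
  obtain ⟨h9, P, hPn, hP3, hPc⟩ := S.struct hk hc ω hω (fun h => hkN (h ▸ N.one_mem)) H hH
  have hHK : H ≤ K := hH ▸ inf_le_left
  have hHω : ∀ h ∈ H, h • ω = ω := by
    intro h hh
    rw [hH] at hh
    exact hh.2
  let π := QuotientGroup.mk' N
  have hπs : Function.Surjective π := QuotientGroup.mk'_surjective N
  have hπk : ∀ g, π g = 1 ↔ g ∈ N := fun g => QuotientGroup.eq_one_iff g
  have hker : π.ker = N := QuotientGroup.ker_mk' N
  let ψ : H →* G ⧸ N := π.comp H.subtype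
  have hψ : Function.Injective ψ := by
    rw [injective_iff_map_eq_one]
    intro a ha
    have ha' : (a : G) ∈ N := (hπk _).mp ha
    by_contra hne
    exact S.notN (fun h => hne (Subtype.ext h)) (hHω a a.2) ha'
  have hrange : ∀ y ∈ K.map π, ∃ h : H, ψ h = y := by
    rintro _ ⟨g, hg, rfl⟩
    obtain ⟨m, hm, h⟩ := S.exists_mul hg ω
    refine ⟨⟨m * g, by rw [hH]; exact ⟨K.mul_mem (S.NleK hm) hg, h⟩⟩, ?_⟩
    show π (m * g) = π g
    rw [map_mul, (hπk m).mpr hm, one_mul]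
  have hψK : ∀ h : H, ψ h ∈ K.map π := fun h => ⟨h, hHK h.2, rfl⟩
  have hP3' : ∀ x : H, x ∈ P ↔ x ^ 3 = 1 := by
    intro x
    constructor
    · intro hx
      have := pow_card_eq_one' (x := (⟨x, hx⟩ : P))
      rw [hP3] at this
      exact congrArg Subtype.val this
    · intro hx
      have h1 : x ^ P.index ∈ P := P.pow_index_mem x
      have h2 := P.card_mul_index
      rw [hP3] at h2
      have h3 : ¬ 3 ∣ P.index := by
        rintro ⟨c, hc⟩
        exact h9 ⟨c, by rw [← h2, hc]; ring⟩
      have h4 : P.index = 3 * (P.index / 3) + P.index % 3 := (Nat.div_add_mod _ _).symm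
      rw [h4, pow_add, pow_mul, hx, one_pow, one_mul] at h1
      have h5 : P.index % 3 = 1 ∨ P.index % 3 = 2 := by omega
      rcases h5 with h5 | h5
      · rwa [h5, pow_one] at h1
      · rw [h5] at h1
        have : x ^ 2 = x⁻¹ := by
          rw [eq_inv_iff_mul_eq_one, ← pow_succ]; exact hx
        rw [this] at h1
        exact (P.inv_mem_iff).mp h1
  have hKn' : (K.map π).Normal := hKn.map π hπs
  have hAn' : (A.map π).Normal := hAn.map π hπs
  have hPmem : ∀ x, x ∈ P.map ψ ↔ x ∈ K.map π ∧ x ^ 3 = 1 := by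
    intro x
    constructor
    · rintro ⟨y, hy, rfl⟩
      refine ⟨hψK y, ?_⟩
      rw [← map_pow, (hP3' y).mp hy, map_one]
    · rintro ⟨hx, h3⟩
      obtain ⟨y, rfl⟩ := hrange x hx
      refine ⟨y, (hP3' y).mpr (hψ ?_), rfl⟩
      rw [map_pow, h3, map_one]
  have hPn' : (P.map ψ).Normal := by
    constructor
    intro x hx g
    rw [hPmem] at hx ⊢
    refine ⟨hKn'.conj_mem x hx.1 g, ?_⟩
    rw [conj_pow, hx.2]; simp
  have hiA : (A.map π).index = A.index :=
    Subgroup.index_map_eq _ hπs (hker.trans_le (S.NleK.trans hKA))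
  have hiK : (K.map π).index = K.index := Subgroup.index_map_eq _ hπs (hker.trans_le S.NleK)
  have hKA' : K.map π ≤ A.map π := Subgroup.map_mono hKA
  have hrel : (K.map π).relIndex (A.map π) = 3 := by
    have h1 := Subgroup.relIndex_mul_index hKA'
    have h2 := Subgroup.relIndex_mul_index hKA
    rw [hiA, hiK, ← h2, hKA3] at h1
    exact Nat.eq_of_mul_eq_mul_right (Nat.pos_of_ne_zero A.index_ne_zero_of_finite) h1
  have hKmem : ∀ g, π g ∈ K.map π → g ∈ K := by
    rintro g ⟨g', hg', h⟩
    have h1 : g'⁻¹ * g ∈ N := by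
      rw [← hπk, map_mul, map_inv, h, inv_mul_cancel]
    have := K.mul_mem hg' (S.NleK h1)
    rwa [mul_inv_cancel_left] at this
  obtain ⟨R, hRn, hRA, hRK, hR3⟩ := exists_compl (P.map ψ) (K.map π) (A.map π)
    (fun x hx => ((hPmem x).mp hx).1) hKA'
    (by rw [Subgroup.card_map_of_injective hψ, hP3]) (by
      intro y hy hyc
      obtain ⟨z, rfl⟩ := hrange y hy
      refine ⟨z, hPc z fun x hx => hψ ?_, rfl⟩
      rw [map_mul, map_mul]
      exact hyc _ ⟨x, hx, rfl⟩) (by rw [hiA]; exact hAi) hrel (by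
      rintro _ ⟨g, hg, rfl⟩ hgK ⟨x, hx, hxg⟩
      by_contra hne
      apply hgK
      refine ⟨g, ?_, rfl⟩
      rw [← map_pow] at hxg hne
      have hx1 : (x : G) ^ 3 = 1 := by
        have := (hP3' x).mp hx
        exact congrArg Subtype.val this
      have hm : g ^ 3 * (x : G)⁻¹ ∈ N := by
        rw [← hπk, map_mul, map_inv, ← hxg]
        exact mul_inv_cancel _
      have hgN : g ^ 3 ∉ N := fun h => hne ((hπk _).mpr h)
      have hgK3 : g ^ 3 ∈ K := by
        have := K.mul_mem (S.NleK hm) (hHK x.2)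
        rwa [inv_mul_cancel_right] at this
      have hCx : CN N (x : G) ≠ ⊥ := by
        apply S.p_CN
        have hd := orderOf_dvd_of_pow_eq_one hx1
        rcases (Nat.dvd_prime Nat.prime_three).mp hd with h | h
        · exact IsPGroup.of_card (n := 0) (by rw [Nat.card_zpowers, h, pow_zero])
        · exact IsPGroup.of_card (n := 1) (by rw [Nat.card_zpowers, h, pow_one])
      have hCg : CN N (g ^ 3) ≠ ⊥ := by
        have := S.CN_mul (k := (x : G)) hm
        rw [inv_mul_cancel_right] at this
        rwa [this]
      obtain ⟨ω', h'⟩ := S.exists_fix hgK3 hgN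
      refine hfixK g hg ω' ((S.type3 hgK3 hgN hCg).2 ω' (g • ω') h' ?_)
      rw [← mul_smul, ← pow_succ, pow_succ', mul_smul, h'])
  refine ⟨R.comap π, hRn.comap π, ?_, ?_, ?_⟩
  · intro g hg
    obtain ⟨a, ha, h⟩ := hRA hg
    have h1 : a⁻¹ * g ∈ N := by
      rw [← hπk, map_mul, map_inv, h, inv_mul_cancel]
    have := A.mul_mem ha (hKA (S.NleK h1))
    rwa [mul_inv_cancel_left] at this
  · rintro g ⟨h1, h2⟩
    have : π g ∈ R ⊓ K.map π := ⟨h1, g, h2, rfl⟩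
    rw [hRK, Subgroup.mem_bot] at this
    exact (hπk g).mp this
  · have h1 := (R.comap π).card_mul_index
    rw [Subgroup.index_comap_of_surjective _ hπs] at h1
    have h2 := R.card_mul_index
    have h3 := N.card_mul_index
    have h4 : N.index = Nat.card (G ⧸ N) := rfl
    rw [h4, ← h2, ← h1, hR3] at h3
    refine (Nat.eq_of_mul_eq_mul_right (Nat.pos_of_ne_zero R.index_ne_zero_of_finite) ?_).symm
    rw [← h3]; ring
end

end Fix3

theorem stmt_14 (G Ω : Type*) [Group G] [Finite G] [MulAction G Ω] [Finite Ω]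
    [FaithfulSMul G Ω] [IsPretransitive G Ω] (hfix : HasFixity G Ω 3)
    (N : Subgroup G) (hmin : IsMinimalNormal G N)
    (p : ℕ) (n : ℕ) (hp : p.Prime) (hcard : Nat.card N = p ^ n)
    (hsemi : IsSemiregular G Ω N)
    (horb : {s : Set Ω | IsOrbitOf G Ω N s}.ncard = 3) :
    ∃ F : Subgroup G, F.Normal ∧
      (IsRegularOn G Ω F ∨
        ((F.index = 3 ∨ F.index = 6) ∧ {s : Set Ω | IsOrbitOf G Ω F s}.ncard = 3 ∧
          ∀ s : Set Ω, IsOrbitOf G Ω F s → IsFrobeniusOn G Ω F s)) := by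
  obtain ⟨hNn, hNb, hNmin⟩ := hmin
  have fp : Fact p.Prime := ⟨hp⟩
  have hcomm : ∀ a ∈ N, ∀ b ∈ N, a * b = b * a := by
    have hpg : IsPGroup p N := IsPGroup.of_card hcard
    have hnt : Nontrivial N := (Subgroup.nontrivial_iff_ne_bot N).mpr hNb
    have hcn := hpg.center_nontrivial
    have hM : ((Subgroup.center N).map N.subtype).Normal := inferInstance
    have hle : (Subgroup.center N).map N.subtype ≤ N := by
      rintro _ ⟨x, _, rfl⟩
      exact x.2
    rcases hNmin _ hM hle with h | h
    · rw [Subgroup.map_eq_bot_iff_of_injective _ N.subtype_injective] at h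
      exact absurd h ((Subgroup.nontrivial_iff_ne_bot _).mp hcn)
    · intro a ha b hb
      rw [← h] at ha
      obtain ⟨x, hx, rfl⟩ := ha
      have := Subgroup.mem_center_iff.mp hx ⟨b, hb⟩
      exact (congrArg Subtype.val this).symm
  obtain ⟨K, A, hKn, hAn, hK, hKA, hAi, hKA3, hfixK⟩ := Fix3.blocks G Ω N horb
  have S : Fix3.Setup G Ω N K p n :=
    ⟨hNn, hp, hcard, hNb, hcomm, hsemi, hfix.1, hK, horb⟩
  by_cases hKN : K ≤ N
  · have hKeq : K = N := le_antisymm hKN S.NleK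
    refine ⟨A, hAn, Or.inl (S.regular A A hfixK le_rfl (inf_le_right.trans hKN) ?_)⟩
    have h1 := Subgroup.relIndex_mul_index hKA
    have h2 := K.card_mul_index
    have h3 := A.card_mul_index
    rw [← h1, hKA3, ← h3, hKeq] at h2
    refine (Nat.eq_of_mul_eq_mul_right (Nat.pos_of_ne_zero A.index_ne_zero_of_finite) ?_).symm
    rw [← h2]; ring
  by_cases hall : ∀ k ∈ K, k ∉ N → Fix3.CN N k = ⊥
  · have horbK : ∀ ω : Ω, orbit K ω = orbit N ω := by
      intro ω
      ext x
      constructor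
      · rintro ⟨g, rfl⟩
        exact (hK g).mp g.2 ω
      · rintro ⟨m, rfl⟩
        exact ⟨⟨m, S.NleK m.2⟩, rfl⟩
    have hset : ∀ s : Set Ω, IsOrbitOf G Ω K s ↔ IsOrbitOf G Ω N s := by
      intro s
      simp only [IsOrbitOf, horbK]
    refine ⟨K, hKn, Or.inr ⟨?_, ?_, ?_⟩⟩
    · have h1 := Subgroup.relIndex_mul_index hKA
      rw [hKA3] at h1
      rcases hAi with h | h <;> rw [h] at h1 <;> omega
    · simp only [hset]
      exact horb
    · intro s hs
      rw [hset] at hs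
      obtain ⟨ω, rfl⟩ := hs
      constructor
      · obtain ⟨k, hk, hkN⟩ := Set.not_subset.mp hKN
        obtain ⟨x, hx, h⟩ := S.type1 hk hkN (hall k hk hkN) ω
        exact ⟨k, hk, fun h => hkN (h ▸ N.one_mem), x, hx, h⟩
      · intro f hf hf1 x hx y hy h1 h2
        refine S.unique1 (hall f hf (S.notN hf1 h1)) h2 h1 ?_
        rw [← orbit_eq_iff] at hx hy ⊢
        rw [hx, hy]
  · push Not at hall
    obtain ⟨k, hk, hkN, hc⟩ := hall
    have hp3 : p = 3 := by
      have h1 := (S.type3 hk hkN hc).1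
      have h2 : Nat.card (Fix3.CN N k) ∣ Nat.card N := Subgroup.card_dvd_of_le inf_le_left
      rw [h1, hcard] at h2
      exact ((Nat.prime_dvd_prime_iff_eq Nat.prime_three hp).mp
        (Nat.prime_three.dvd_of_dvd_pow h2)).symm
    subst hp3
    obtain ⟨R, hRn, hRA, hRK, hR⟩ := S.caseB A hKn hAn hKA
      (by rcases hAi with h | h <;> rw [h] <;> norm_num) hKA3 hfixK hk hkN hc
    exact ⟨R, hRn, Or.inl (S.regular A R hfixK hRA hRK hR)⟩
end

section
/- Let G be a finite group acting transitively and faithfully with fixity 3 on a set Ω with |Ω| = 9, and suppose G has a minimal normal subgroup N of order 3. Then G has a normal subgroup acting regularly on Ω. -/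
open MulAction Pointwise

section helpers
variable {G Ω : Type*} [Group G] [MulAction G Ω]

theorem aux_semireg [FaithfulSMul G Ω] [IsPretransitive G Ω] (N : Subgroup G) (hn : N.Normal)
    (hN : Nat.card N = 3) (n : G) (hnN : n ∈ N) (ω : Ω) (h : n • ω = ω) : n = 1 := by
  by_contra hne
  have hp : (Nat.card N).Prime := by rw [hN]; norm_num
  have : Fact (Nat.card N).Prime := ⟨hp⟩
  have hs : stabilizer N ω = ⊤ := by
    rcases (stabilizer N ω).eq_bot_or_eq_top_of_prime_card with h0 | h0
    · exfalso
      apply hne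
      have : (⟨n, hnN⟩ : N) ∈ stabilizer N ω := h
      rw [h0, Subgroup.mem_bot] at this
      exact congrArg Subtype.val this
    · exact h0
  apply hne
  apply FaithfulSMul.eq_of_smul_eq_smul (α := Ω)
  intro ω'
  obtain ⟨g, rfl⟩ := exists_smul_eq G ω ω'
  have hc : g⁻¹ * n * g ∈ N := by simpa using hn.conj_mem n hnN g⁻¹
  have : (⟨_, hc⟩ : N) ∈ stabilizer N ω := by rw [hs]; trivial
  have h2 : (g⁻¹ * n * g) • ω = ω := this
  rw [one_smul]
  conv_rhs => rw [← h2]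
  simp [smul_smul, mul_assoc]

theorem aux_pow3 (N : Subgroup G) (hN : Nat.card N = 3) (n : G) (h : n ∈ N) : n ^ 3 = 1 := by
  have : (⟨n, h⟩ : N) ^ 3 = 1 := by rw [← hN]; exact pow_card_eq_one'
  simpa using congrArg Subtype.val this

theorem aux_pow9 [FaithfulSMul G Ω] (N : Subgroup G)
    (hN : Nat.card N = 3) (g : G) (hg : ∀ n ∈ N, g * n = n * g)
    (hb : ∀ ω : Ω, g • ω ∈ orbit N ω) : g ^ 3 = 1 := by
  apply FaithfulSMul.eq_of_smul_eq_smul (α := Ω)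
  intro ω
  obtain ⟨⟨n, hn⟩, h⟩ := hb ω
  have h : n • ω = g • ω := h
  have h1 : g • g • ω = n • n • ω := by
    rw [← h, smul_smul, hg n hn, mul_smul, ← h]
  have h2 : g • g • g • ω = n • n • n • ω := by
    rw [h1, smul_smul, hg n hn, mul_smul, smul_smul g n, hg n hn, mul_smul, ← h]
  have : n ^ 3 = 1 := aux_pow3 N hN n hn
  rw [one_smul, pow_succ, pow_two, mul_smul, mul_smul, h2, ← mul_smul, ← mul_smul,
    ← pow_two, ← pow_succ, this, one_smul]

theorem aux_orb [FaithfulSMul G Ω] [IsPretransitive G Ω] (N : Subgroup G) (hn : N.Normal)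
    (hN : Nat.card N = 3) (ω : Ω) : Nat.card (orbit N ω) = 3 := by
  rw [← hN]
  refine (Nat.card_congr (Equiv.ofBijective
    (fun n : N => (⟨n • ω, mem_orbit _ _⟩ : orbit N ω)) ⟨?_, ?_⟩)).symm
  · intro a b hab
    have hab : (a : G) • ω = (b : G) • ω := congrArg Subtype.val hab
    have := aux_semireg N hn hN ((b : G)⁻¹ * a) (N.mul_mem (N.inv_mem b.2) a.2) ω
      (by rw [mul_smul, hab, inv_smul_smul])
    exact Subtype.ext (inv_mul_eq_one.mp this).symm
  · rintro ⟨_, n, rfl⟩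
    exact ⟨n, rfl⟩

theorem aux_P [Finite G] [Finite Ω] [FaithfulSMul G Ω] [IsPretransitive G Ω] (hΩ : Nat.card Ω = 9)
    (N : Subgroup G) (hn : N.Normal) (hN : Nat.card N = 3) :
    ∃ P : Subgroup G, P.Normal ∧ (∀ p ∈ P, ∀ n ∈ N, p * n = n * p) ∧ IsPGroup 3 P ∧
      (∀ g : G, g ^ 2 ∈ P) ∧ N ≤ P := by
  classical
  let B := orbitRel.Quotient N Ω
  let act : MulAction G B :=
    { smul := fun g => Quotient.map (fun ω => g • ω) (by
        rintro a b ⟨⟨n, hnN⟩, rfl⟩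
        refine ⟨⟨g * n * g⁻¹, hn.conj_mem n hnN g⟩, ?_⟩
        change (g * n * g⁻¹) • g • b = g • n • b
        simp [smul_smul])
      one_smul := by
        intro b
        induction b using Quotient.inductionOn with | _ ω => 
        exact congrArg (Quotient.mk _) (one_smul G ω)
      mul_smul := by
        intro g h b
        induction b using Quotient.inductionOn with | _ ω => 
        exact congrArg (Quotient.mk _) (mul_smul g h ω) }
  have hmk : ∀ (g : G) (ω : Ω), g • (Quotient.mk _ ω : B) = Quotient.mk _ (g • ω) := fun _ _ => rfl
  have : Finite B := Quotient.finite _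
  let : Fintype B := Fintype.ofFinite B
  have hB : Nat.card B = 3 := by
    have h1 := Nat.card_congr (selfEquivSigmaOrbits N Ω)
    have h2 : ∀ ω : Ω, Nat.card (orbit N ω) = 3 := aux_orb N hn hN
    rw [Nat.card_sigma, hΩ, Finset.sum_congr rfl (fun x _ => h2 _)] at h1
    simp only [Finset.sum_const, Finset.card_univ, smul_eq_mul] at h1
    rw [Nat.card_eq_fintype_card]
    change 9 = Fintype.card B * 3 at h1
    omega
  let f : G →* ℤˣ := (Equiv.Perm.sign (α := B)).comp (toPermHom G B)
  refine ⟨Subgroup.centralizer (N : Set G) ⊓ f.ker, inferInstance, ?_, ?_, ?_⟩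
  · intro p hp n hnN
    exact (Subgroup.mem_centralizer_iff.mp hp.1 n hnN).symm
  · rintro ⟨g, hg⟩
    refine ⟨2, ?_⟩
    apply Subtype.ext
    change g ^ 3 ^ 2 = 1
    rw [show 3 ^ 2 = 3 * 3 from rfl, pow_mul]
    have hgc : g ∈ Subgroup.centralizer (N : Set G) := hg.1
    apply aux_pow9 (Ω := Ω) N hN
    · intro n hnN
      exact (Subgroup.mem_centralizer_iff.mp (pow_mem hgc 3) n hnN).symm
    · intro ω
      have hal : toPermHom G B g ∈ alternatingGroup B := hg.2
      have : Nontrivial B := by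
        rw [← Finite.one_lt_card_iff_nontrivial]
        omega
      have hc : Nat.card (alternatingGroup B) = 3 := by
        rw [nat_card_alternatingGroup, hB]; rfl
      have h3 := aux_pow3 _ hc _ hal
      rw [← map_pow] at h3
      have h4 : (toPermHom G B (g ^ 3)) (Quotient.mk _ ω) = Quotient.mk _ ω := by rw [h3]; rfl
      exact Quotient.exact (s := orbitRel N Ω) h4
  · have hsq : ∀ g : G, g ^ 2 ∈ Subgroup.centralizer (N : Set G) ⊓ f.ker := by
      intro g
      refine ⟨?_, ?_⟩
      · change g ^ 2 ∈ Subgroup.centralizer (N : Set G)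
        rw [Subgroup.mem_centralizer_iff]
        intro n hnN
        by_cases h1 : n = 1
        · simp [h1]
        have hk : ∀ m ∈ N, m = 1 ∨ m = n ∨ m = n⁻¹ := by
          intro m hm
          have : Fact (Nat.Prime 3) := ⟨by norm_num⟩
          have := mem_zpowers_of_prime_card (g := (⟨n, hnN⟩ : N)) (g' := ⟨m, hm⟩) hN (by
            intro h; exact h1 (congrArg Subtype.val h))
          rw [Subgroup.mem_zpowers_iff] at this
          obtain ⟨k, hk⟩ := this
          have hk : n ^ k = m := by simpa using congrArg Subtype.val hk
          have h3 : n ^ (3:ℤ) = 1 := by exact_mod_cast aux_pow3 N hN n hnN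
          have : k = 3 * (k / 3) + k % 3 := (Int.mul_ediv_add_emod k 3).symm
          rw [this, zpow_add, zpow_mul, h3, one_zpow, one_mul] at hk
          have h5 : k % 3 = 0 ∨ k % 3 = 1 ∨ k % 3 = 2 := by omega
          rcases h5 with h | h | h
          · left; simp [← hk, h]
          · right; left; simp [← hk, h]
          · right; right
            rw [← hk, h, eq_inv_iff_mul_eq_one, ← zpow_add_one]
            exact h3
        have hA := hn.conj_mem n hnN g
        rcases hk _ hA with h | h | h
        · exact absurd (conj_eq_one_iff.mp h) h1
        · have h' : g * n = n * g := mul_inv_eq_iff_eq_mul.mp h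
          have : Commute n g := h'.symm
          exact this.pow_right 2
        · have h' : g * n = n⁻¹ * g := mul_inv_eq_iff_eq_mul.mp h
          have h'' : g * n⁻¹ = n * g := by
            rw [← mul_inv_eq_iff_eq_mul, ← inv_inj]
            simp only [mul_inv_rev, inv_inv] at *
            rw [← mul_assoc]; exact h
          rw [pow_two, mul_assoc g g n, h', ← mul_assoc g, h'', mul_assoc]
      · change f (g ^ 2) = 1
        rw [map_pow]
        exact Int.units_sq _
    refine ⟨hsq, ?_⟩
    intro n hnN
    have h3 := aux_pow3 N hN n hnN
    have : n = (n ^ 2) ^ 2 := by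
      rw [← pow_mul]; change n = n ^ (3 + 1); rw [pow_succ, h3, one_mul]
    rw [this]
    exact hsq _

theorem aux_trans [Finite G] [Finite Ω] [IsPretransitive G Ω] (hΩ : Nat.card Ω = 9)
    (P : Subgroup G) (hP : P.Normal) (hsq : ∀ g : G, g ^ 2 ∈ P) : IsPretransitive P Ω := by
  have h2 : IsPGroup 2 (G ⧸ P) := by
    intro x
    induction x using QuotientGroup.induction_on with | _ g =>
    refine ⟨1, ?_⟩
    rw [← QuotientGroup.mk_pow, QuotientGroup.eq_one_iff]
    exact hsq g
  obtain ⟨k, hk⟩ : ∃ k, P.index = 2 ^ k := by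
    have : Fact (Nat.Prime 2) := ⟨Nat.prime_two⟩
    exact IsPGroup.iff_card.mp h2
  have hor : ∀ ω : Ω, orbit P ω = Set.univ := by
    intro ω
    have h1 : (stabilizer P ω).index = (orbit P ω).ncard := index_stabilizer P ω
    have h3 : (stabilizer G ω).index = 9 := by rw [index_stabilizer_of_transitive, hΩ]
    have h4 : (stabilizer P ω).index = (stabilizer G ω).relIndex P := by
      rw [Subgroup.relIndex]; congr 1
    have h5 : (stabilizer G ω ⊓ P).index = (orbit P ω).ncard * 2 ^ k := by
      rw [← h1, h4, ← hk, ← Subgroup.relIndex_mul_index (inf_le_right), Subgroup.inf_relIndex_right]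
    have h6 : 9 ∣ (orbit P ω).ncard * 2 ^ k := by
      rw [← h5, ← h3]; exact Subgroup.index_dvd_of_le inf_le_left
    have h7 : 9 ∣ (orbit P ω).ncard := by
      refine Nat.Coprime.dvd_of_dvd_mul_right ?_ h6
      exact Nat.Coprime.pow_right _ (by norm_num)
    have h8 : 0 < (orbit P ω).ncard :=
      (Set.ncard_pos (Set.toFinite _)).mpr ⟨ω, mem_orbit_self _⟩
    apply Set.eq_of_subset_of_ncard_le (Set.subset_univ _)
    rw [Set.ncard_univ, hΩ]
    exact Nat.le_of_dvd h8 h7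
  refine ⟨fun a b => ?_⟩
  have : b ∈ orbit P a := by rw [hor]; trivial
  exact this


theorem aux_three {m k : ℕ} (hm : m = 3 ^ k) (h : m ≤ 8) : m = 1 ∨ m = 3 := by
  rcases k with _ | _ | k
  · left; simpa using hm
  · right; simpa using hm
  · exfalso
    have : 0 < 3 ^ k := by positivity
    rw [pow_succ, pow_succ] at hm
    omega

theorem aux_ex [Finite Ω] [FaithfulSMul G Ω] [IsPretransitive G Ω] (hΩ : Nat.card Ω = 9)
    (N : Subgroup G) (hn : N.Normal) (hN : Nat.card N = 3) (ω : Ω) : ∃ ω', ω' ∉ orbit N ω := by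
  by_contra! h
  have h1 : (orbit N ω).ncard = 3 := aux_orb N hn hN ω
  rw [Set.eq_univ_of_forall h, Set.ncard_univ] at h1
  omega

theorem aux_stab [Finite G] [Finite Ω] [FaithfulSMul G Ω] [IsPretransitive G Ω]
    (hfix : ∀ g : G, g ≠ 1 → (fixedBy Ω g).ncard ≤ 3) (hΩ : Nat.card Ω = 9)
    (N : Subgroup G) (hn : N.Normal) (hN : Nat.card N = 3) (P : Subgroup G)
    (hc : ∀ p ∈ P, ∀ n ∈ N, p * n = n * p) (hP : IsPGroup 3 P) (ω : Ω) :
    Nat.card (stabilizer P ω) = 1 ∨ Nat.card (stabilizer P ω) = 3 := by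
  have : Fact (Nat.Prime 3) := ⟨by norm_num⟩
  obtain ⟨ω', hω'⟩ := aux_ex hΩ N hn hN ω
  have hS : IsPGroup 3 (stabilizer P ω) := hP.to_subgroup _
  have hfx : ∀ p ∈ P, ∀ a : Ω, p • a = a → ∀ b ∈ orbit N a, p • b = b := by
    rintro p hp a ha _ ⟨⟨n, hnN⟩, rfl⟩
    change p • n • a = n • a
    rw [smul_smul, hc p hp n hnN, mul_smul, ha]
  have h1 : (orbit N ω).ncard = 3 := aux_orb N hn hN ω
  have h1' : (orbit N ω').ncard = 3 := aux_orb N hn hN ω'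
  have hb : stabilizer (stabilizer P ω) ω' = ⊥ := by
    rw [eq_bot_iff]
    rintro ⟨⟨p, hp⟩, hps⟩ hs
    have hps : p • ω = ω := hps
    have hs : p • ω' = ω' := hs
    by_contra hne
    have hne : p ≠ 1 := by
      rintro rfl
      exact hne rfl
    have hle := hfix p hne
    have hsub : orbit N ω ∪ orbit N ω' ⊆ fixedBy Ω p := by
      rintro b (hb | hb)
      · exact hfx p hp ω hps b hb
      · exact hfx p hp ω' hs b hb
    have hd : Disjoint (orbit N ω) (orbit N ω') := by
      rw [Set.disjoint_left]
      intro b hb hb'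
      apply hω'
      rw [← orbit_eq_iff.mpr hb, orbit_eq_iff.mpr hb']
      exact mem_orbit_self _
    have := Set.ncard_le_ncard hsub (Set.toFinite _)
    rw [Set.ncard_union_eq hd (Set.toFinite _) (Set.toFinite _)] at this
    omega
  have hcard : Nat.card (stabilizer P ω) = (orbit (stabilizer P ω) ω').ncard := by
    rw [← index_stabilizer, hb, Subgroup.index_bot]
  obtain ⟨k, hk⟩ := IsPGroup.iff_card.mp hS
  refine aux_three hk ?_
  rw [hcard]
  have hd : Disjoint (orbit N ω) (orbit (stabilizer P ω) ω') := by
    rw [Set.disjoint_left]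
    rintro b hb ⟨⟨⟨p, hp⟩, hps⟩, h⟩
    have hps : p • ω = ω := hps
    have h : p • ω' = b := h
    have h2 := hfx p hp ω hps b hb
    apply hω'
    rw [← h, smul_left_cancel_iff] at h2
    rw [← h2, h]
    exact hb
  have h5 := Set.ncard_le_ncard (Set.subset_univ (orbit N ω ∪ orbit (stabilizer P ω) ω')) (Set.toFinite _)
  rw [Set.ncard_union_eq hd (Set.toFinite _) (Set.toFinite _), Set.ncard_univ, hΩ] at h5
  omega

theorem aux_reg [Finite G] [Finite Ω] [FaithfulSMul G Ω] [IsPretransitive G Ω]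
    (hΩ : Nat.card Ω = 9)
    (N : Subgroup G) (hn : N.Normal) (hN : Nat.card N = 3) (P : Subgroup G)
    (hc : ∀ p ∈ P, ∀ n ∈ N, p * n = n * p) (hP : IsPGroup 3 P) (hNP : N ≤ P) (ω : Ω)
    (r : G) (hr : r ∈ P) (hrω : r • ω ∉ orbit N ω) :
    IsRegularOn G Ω (Subgroup.closure (insert r (N : Set G))) := by
  have : Fact (Nat.Prime 3) := ⟨by norm_num⟩
  set R := Subgroup.closure (insert r (N : Set G)) with hR
  have hNR : N ≤ R := fun x hx => Subgroup.subset_closure (Or.inr hx)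
  have hrR : r ∈ R := Subgroup.subset_closure (Or.inl rfl)
  have hRP : R ≤ P := by
    rw [hR, Subgroup.closure_le]
    rintro x (rfl | hx)
    · exact hr
    · exact hNP hx
  have hcomm : ∀ a ∈ R, ∀ b ∈ R, a * b = b * a := by
    have : IsMulCommutative R := by
      apply Subgroup.isMulCommutative_closure
      rintro x (rfl | hx) y (rfl | hy)
      · rfl
      · exact hc _ hr _ hy
      · exact (hc _ hr _ hx).symm
      · exact hc _ (hNP hx) _ hy
    intro a ha b hb
    exact setLike_mul_comm ha hb
  have hRp : IsPGroup 3 R := hP.to_le hRP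
  obtain ⟨k, hk⟩ := hRp.card_orbit ω
  have h1 : (orbit N ω).ncard = 3 := aux_orb N hn hN ω
  have h2 : insert (r • ω) (orbit N ω) ⊆ orbit R ω := by
    rintro b (rfl | ⟨n, rfl⟩)
    · exact ⟨⟨r, hrR⟩, rfl⟩
    · exact ⟨⟨n, hNR n.2⟩, rfl⟩
  have h3 := Set.ncard_le_ncard h2 (Set.toFinite _)
  rw [Set.ncard_insert_of_notMem hrω (Set.toFinite _), h1] at h3
  have h4 : ¬ (orbit R ω).ncard ≤ 8 := by
    intro h
    rcases aux_three hk h with h | h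
    · change (orbit R ω).ncard = 1 at h
      omega
    · change (orbit R ω).ncard = 3 at h
      omega
  have h5 : orbit R ω = Set.univ := by
    apply Set.eq_of_subset_of_ncard_le (Set.subset_univ _)
    rw [Set.ncard_univ, hΩ]
    omega
  have h6 : ∀ b, ∃ x ∈ R, x • ω = b := by
    intro b
    have : b ∈ orbit R ω := by rw [h5]; trivial
    obtain ⟨x, hx⟩ := this
    exact ⟨x, x.2, hx⟩
  have h7 : ∀ a b : Ω, ∃ x ∈ R, x • a = b := by
    intro a b
    obtain ⟨x, hx, rfl⟩ := h6 a
    obtain ⟨y, hy, rfl⟩ := h6 b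
    exact ⟨y * x⁻¹, R.mul_mem hy (R.inv_mem hx), by simp [smul_smul]⟩
  refine ⟨h7, ?_⟩
  intro x hx hne a ha
  apply hne
  apply FaithfulSMul.eq_of_smul_eq_smul (α := Ω)
  intro b
  obtain ⟨y, hy, rfl⟩ := h7 a b
  rw [one_smul, smul_smul, hcomm x hx y hy, mul_smul, ha]

theorem aux_inj {R : Subgroup G} (hR : IsRegularOn G Ω R) {ω : Ω} {a b : G} (ha : a ∈ R)
    (hb : b ∈ R) (h : a • ω = b • ω) : a = b := by
  by_contra hne
  refine hR.2 (b⁻¹ * a) (R.mul_mem (R.inv_mem hb) ha) ?_ ω ?_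
  · intro h'
    exact hne (inv_mul_eq_one.mp h').symm
  · rw [mul_smul, h, inv_smul_smul]

theorem aux_eq {R S : Subgroup G} (hR : IsRegularOn G Ω R) (hS : IsRegularOn G Ω S) (ω : Ω)
    (h : S ≤ R) : S = R := by
  refine le_antisymm h ?_
  intro x hx
  obtain ⟨y, hy, hyx⟩ := hS.1 ω (x • ω)
  rw [← aux_inj hR (h hy) hx hyx]
  exact hy

theorem aux_card {R : Subgroup G} (hR : IsRegularOn G Ω R) (ω : Ω) : Nat.card R = Nat.card Ω := by
  refine Nat.card_congr (Equiv.ofBijective (fun x : R => (x : G) • ω) ⟨?_, ?_⟩)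
  · intro a b hab
    exact Subtype.ext (aux_inj hR a.2 b.2 hab)
  · intro b
    obtain ⟨x, hx, h⟩ := hR.1 ω b
    exact ⟨⟨x, hx⟩, h⟩

theorem aux_main [Finite G] [Finite Ω] [FaithfulSMul G Ω] [IsPretransitive G Ω]
    (hfix : ∀ g : G, g ≠ 1 → (fixedBy Ω g).ncard ≤ 3) (hΩ : Nat.card Ω = 9)
    (N : Subgroup G) (hn : N.Normal) (hN : Nat.card N = 3) :
    ∃ R : Subgroup G, R.Normal ∧ IsRegularOn G Ω R := by
  obtain ⟨P, hPn, hc, hP, hsq, hNP⟩ := aux_P hΩ N hn hN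
  have hPt := aux_trans hΩ P hPn hsq
  have : Fact (Nat.Prime 3) := ⟨by norm_num⟩
  have : Fact (Nat.Prime 2) := ⟨by norm_num⟩
  have hne : Nonempty Ω := by
    apply (Nat.card_pos_iff.mp _).1
    omega
  obtain ⟨ω⟩ := hne
  obtain ⟨ω', hω'⟩ := aux_ex hΩ N hn hN ω
  have hst := aux_stab hfix hΩ N hn hN P hc hP ω
  have hPcard : Nat.card P = 9 * Nat.card (stabilizer P ω) := by
    rw [← hΩ, ← index_stabilizer_of_transitive P ω, mul_comm, Subgroup.card_mul_index]
  let X : SubMulAction (ConjAct G) (Subgroup G) :=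
    { carrier := {R | N ≤ R ∧ R ≤ P ∧ IsRegularOn G Ω R}
      smul_mem' := by
        rintro c R ⟨h1, h2, h3⟩
        refine ⟨?_, ?_, ?_, ?_⟩
        · rw [← hn.conjAct c]
          exact Subgroup.pointwise_smul_le_pointwise_smul_iff.mpr h1
        · rw [← hPn.conjAct c]
          exact Subgroup.pointwise_smul_le_pointwise_smul_iff.mpr h2
        · intro a b
          induction c using ConjAct.rec with | _ g =>
          obtain ⟨x, hx, h⟩ := h3.1 (g⁻¹ • a) (g⁻¹ • b)
          refine ⟨ConjAct.toConjAct g • x, Subgroup.smul_mem_pointwise_smul _ _ _ hx, ?_⟩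
          rw [ConjAct.toConjAct_smul, mul_smul, mul_smul, h, smul_inv_smul]
        · intro y hy hy1 a ha
          induction c using ConjAct.rec with | _ g =>
          obtain ⟨x, hx, rfl⟩ := Subgroup.mem_smul_pointwise_iff_exists _ _ _ |>.mp hy
          refine h3.2 x hx ?_ (g⁻¹ • a) ?_
          · rintro rfl
            exact hy1 (smul_one _)
          · rw [ConjAct.toConjAct_smul, mul_smul, mul_smul] at ha
            rw [eq_inv_smul_iff]
            exact ha }
  have hXm : ∀ R, R ∈ X ↔ N ≤ R ∧ R ≤ P ∧ IsRegularOn G Ω R := fun R => Iff.rfl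
  -- each R in X is normalized by P
  have hPX : ∀ R ∈ X, ∀ p ∈ P, ConjAct.toConjAct p • R = R := by
    intro R hR p hp
    obtain ⟨h1, h2, h3⟩ := (hXm R).mp hR
    have hRc : Nat.card (R.subgroupOf P) = 9 := by
      rw [Nat.card_congr (Subgroup.subgroupOfEquivOfLe h2).toEquiv, aux_card h3 ω, hΩ]
    have hi : (R.subgroupOf P).index = Nat.card (stabilizer P ω) := by
      have := Subgroup.card_mul_index (R.subgroupOf P)
      rw [hRc, hPcard] at this
      omega
    have hnorm : (R.subgroupOf P).Normal := by
      rcases hst with h | h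
      · rw [h, Subgroup.index_eq_one] at hi
        rw [hi]; infer_instance
      · apply Subgroup.normal_of_index_eq_minFac_card
        rw [hi, h, hPcard, h]
        norm_num
    rw [Subgroup.normal_subgroupOf_iff_le_normalizer h2] at hnorm
    exact Subgroup.conjAct_pointwise_smul_eq_self (hnorm hp)
  -- X has an odd number of elements
  have hXc : Nat.card X = Nat.card (stabilizer P ω) := by
    obtain ⟨r₀, hr₀⟩ := exists_smul_eq P ω ω'
    have hr₀' : (r₀ : G) • ω = ω' := hr₀
    have hs : ∀ s : stabilizer P ω, ((r₀ : G) * ((s : P) : G)) • ω = ω' := by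
      intro s
      have : ((s : P) : G) • ω = ω := s.2
      rw [mul_smul, this, hr₀']
    have hsP : ∀ s : stabilizer P ω, ((r₀ : G) * ((s : P) : G)) ∈ P := fun s =>
      P.mul_mem r₀.2 (s : P).2
    have hreg := fun s => aux_reg hΩ N hn hN P hc hP hNP ω _ (hsP s) (by rw [hs s]; exact hω')
    symm
    refine Nat.card_congr (Equiv.ofBijective (fun s =>
      (⟨Subgroup.closure (insert ((r₀ : G) * ((s : P) : G)) (N : Set G)), ?_, ?_, hreg s⟩ : X)) ⟨?_, ?_⟩)
    · exact fun x hx => Subgroup.subset_closure (Or.inr hx)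
    · rw [Subgroup.closure_le]
      rintro x (rfl | hx)
      · exact hsP s
      · exact hNP hx
    · intro s t hst
      have hst := congrArg Subtype.val hst
      dsimp only at hst
      have ht : ((r₀ : G) * ((t : P) : G)) ∈
          Subgroup.closure (insert ((r₀ : G) * ((s : P) : G)) (N : Set G)) := by
        rw [hst]; exact Subgroup.subset_closure (Or.inl rfl)
      have := aux_inj (hreg s) (ω := ω) (Subgroup.subset_closure (Or.inl rfl)) ht (by rw [hs, hs])
      exact Subtype.ext (Subtype.ext (mul_left_cancel this))
    · rintro ⟨R, hR⟩
      obtain ⟨h1, h2, h3⟩ := (hXm R).mp hR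
      obtain ⟨r, hr, hrω⟩ := h3.1 ω ω'
      refine ⟨⟨r₀⁻¹ * ⟨r, h2 hr⟩, ?_⟩, ?_⟩
      · change ((r₀ : G)⁻¹ * r) • ω = ω
        rw [mul_smul, hrω, ← hr₀', inv_smul_smul]
      · apply Subtype.ext
        refine aux_eq h3 (hreg _) ω ?_
        rw [Subgroup.closure_le]
        rintro x (rfl | hx)
        · simpa using hr
        · exact h1 hx
  have h2 : IsPGroup 2 (toPermHom (ConjAct G) X).range := by
    rintro ⟨_, c, rfl⟩
    refine ⟨1, ?_⟩
    apply Subtype.ext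
    change (toPermHom (ConjAct G) X c) ^ (2 ^ 1) = 1
    rw [← map_pow, pow_one]
    ext1 R
    apply Subtype.ext
    exact hPX R R.2 (ConjAct.ofConjAct c ^ 2) (hsq _)
  obtain ⟨R, hR⟩ := h2.nonempty_fixed_point_of_prime_not_dvd_card X (by
    rw [hXc]; rcases hst with h | h <;> rw [h] <;> norm_num)
  refine ⟨R, ?_, ((hXm R).mp R.2).2.2⟩
  rw [← Subgroup.normalizer_eq_top_iff, eq_top_iff]
  intro g _
  rw [← Subgroup.conjAct_pointwise_smul_iff]
  exact congrArg Subtype.val (hR ⟨_, ConjAct.toConjAct g, rfl⟩)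

end helpers

theorem stmt_19 (G Ω : Type*) [Group G] [Finite G] [MulAction G Ω] [Finite Ω]
    [FaithfulSMul G Ω] [IsPretransitive G Ω] (hfix : HasFixity G Ω 3)
    (hΩ : Nat.card Ω = 9)
    (N : Subgroup G) (hmin : IsMinimalNormal G N) (hN : Nat.card N = 3) :
    ∃ R : Subgroup G, R.Normal ∧ IsRegularOn G Ω R := by
  exact aux_main hfix.1 hΩ N hmin.1 hN
end
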